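/- arXiv:2205.00059 — 5 statements merged into one kernel-verified Lean document; each statement's English description precedes it below -/
import Mathlib

section
/- Let λ > 0 and β ∈ (0,1]. For every z ∈ ℂ, the Laplace transform of the fractional Poisson measure satisfies ∫_ℝ e^{zx} dπ_{λ,β}(x) = ∑_{k=0}^∞ (e^z λ)^k / k! · E_β^{(k)}(−λ) = E_β(λ(e^z − 1)). -/
/-!
Formally, `∑ (e^z λ)^k / k! · E_β^{(k)}(-λ)` is the Taylor series of the entire function `E_β` at
`-λ` with increment `e^z λ`, hence equals `E_β(λ(e^z - 1))`; the double series is rearranged along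
antidiagonals (`EntireEGF.hasSum_taylor`). Identifying the integral with this series needs the
weights of `fracPoisson` to be nonnegative, because `ENNReal.ofReal` truncates negative numbers.
This is Pollard's theorem that `x ↦ E_β(-x)` is completely monotone for `0 < β ≤ 1`
(`cmSeq_mlSeq`).

The proof of complete monotonicity is as follows. Write `E_β(x) = ∑ m_n xⁿ / n!` with
`m_n = n! / Γ(βn + 1)`. By Euler's limit formula, `m_n` is the limit as `N → ∞` of
`N^{(1-β)n} ∏_{j=0}^{N} (βn + 1 + j) / (n + 1 + j)`. Starting from `m_n = 1`, whose generating
function `e^{-x}` is completely monotone, each factor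
`(βn + j + 1) / (n + j + 1) = β + (1 - β)(j + 1) ∫₀¹ t^{n+j} dt` replaces the generating function
by an average of its dilations, which preserves complete monotonicity (`CMSeq.factor`), and so does
the scaling by `N^{(1-β)n}`. Log-convexity of `Γ` gives `y^s Γ(y+1) ≤ Γ(y+1+s)`
(`rpow_mul_Gamma_le`); this shows that the approximants are bounded by `m_n`, so that the limit can
be taken termwise, and also that `E_β` is entire.
-/

open MeasureTheory Finset
open scoped ENNReal NNReal

noncomputable section

/-- The complex Mittag-Leffler function `E_β(z) = ∑ zⁿ / Γ(βn+1)`. -/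
def mittagLeffler (β : ℝ) (z : ℂ) : ℂ :=
  ∑' n : ℕ, z ^ n / (Complex.Gamma ((β * n + 1 : ℝ) : ℂ))

/-- The real Mittag-Leffler function `E_β(x) = ∑ xⁿ / Γ(βn+1)`. -/
def mittagLefflerR (β : ℝ) (x : ℝ) : ℝ :=
  ∑' n : ℕ, x ^ n / Real.Gamma (β * n + 1)

/-- The fractional Poisson measure `π_{λ,β} = ∑_k (λᵏ/k!) E_β⁽ᵏ⁾(-λ) δ_k` on `ℝ`. -/
def fracPoisson (lam β : ℝ) : Measure ℝ :=
  Measure.sum fun k : ℕ =>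
    ENNReal.ofReal (lam ^ k / k.factorial * iteratedDeriv k (mittagLefflerR β) (-lam)) •
      Measure.dirac (k : ℝ)

/-- The Poisson measure with rate `μ` on `ℝ`, `π_μ({k}) = (μᵏ/k!) e^{-μ}`. -/
def poissonMeasureR (μ : ℝ) : Measure ℝ :=
  Measure.sum fun k : ℕ =>
    ENNReal.ofReal (μ ^ k / k.factorial * Real.exp (-μ)) • Measure.dirac (k : ℝ)

/-- The generalized Appell polynomials
`C_n^{λ,β}(x) = dⁿ/dzⁿ [e^{x log(1+z)} / E_β(λz)]` at `z = 0`. -/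
def genAppell (lam β : ℝ) (n : ℕ) (x : ℂ) : ℂ :=
  iteratedDeriv n
    (fun z : ℂ => Complex.exp (x * Complex.log (1 + z)) / mittagLeffler β (lam * z)) 0

/-- The Appell polynomials `A_n^{λ,β}(x) = dⁿ/dzⁿ [e^{zx} / E_β(λ(eᶻ-1))]` at `z = 0`. -/
def appell (lam β : ℝ) (n : ℕ) (x : ℂ) : ℂ :=
  iteratedDeriv n
    (fun z : ℂ => Complex.exp (z * x) / mittagLeffler β (lam * (Complex.exp z - 1))) 0

/-- Stirling numbers of the first kind, via `(log(1+z))^k = k! ∑_{n≥k} s(n,k) zⁿ/n!`. -/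
def stirlingFst (n k : ℕ) : ℝ :=
  iteratedDeriv n (fun x : ℝ => (Real.log (1 + x)) ^ k) 0 / k.factorial

/-- Stirling numbers of the second kind, via `(eᶻ-1)^k = k! ∑_{n≥k} S(n,k) zⁿ/n!`. -/
def stirlingSnd (n k : ℕ) : ℝ :=
  iteratedDeriv n (fun x : ℝ => (Real.exp x - 1) ^ k) 0 / k.factorial

/-- The `n`-th moment of the fractional Poisson measure. -/
def fpMoment (lam β : ℝ) (n : ℕ) : ℝ := ∫ x, x ^ n ∂(fracPoisson lam β)

/-- `M̃_{λ,β}(m) = m! λᵐ / Γ(mβ+1)`. -/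
def tildeM (lam β : ℝ) (m : ℕ) : ℝ := m.factorial * lam ^ m / Real.Gamma (m * β + 1)

/-- The (partial exponential) Bell polynomials `B_{n,k}(x₁, …, x_{n-k+1})`. -/
def bellPoly (n k : ℕ) (x : ℕ → ℂ) : ℂ :=
  ∑ j ∈ (Fintype.piFinset fun _ : Fin (n - k + 1) => Finset.range (n + 1)).filter
      (fun j => (∑ i, j i) = k ∧ (∑ i, (i.1 + 1) * j i) = n),
    (n.factorial : ℂ) / (∏ i, ((j i).factorial : ℂ)) *
      ∏ i, (x (i.1 + 1) / ((i.1 + 1).factorial : ℂ)) ^ j i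

/-! ### Entire exponential generating functions -/

/-- The sequence `m` has an entire exponential generating function `∑ m n xⁿ / n!`. -/
def EntireEGF (m : ℕ → ℝ) : Prop :=
  ∀ r : ℝ, 0 ≤ r → Summable fun n : ℕ => |m n| * r ^ n / n.factorial

/-- The exponential generating function `∑ m n xⁿ / n!`. -/
def egf (m : ℕ → ℝ) (x : ℝ) : ℝ := ∑' n : ℕ, m n * x ^ n / n.factorial

/-- `egf m` is entire and `x ↦ egf m (-x)` is completely monotone on `[0, ∞)`; the `k`-th derivative of
`egf m` is written as the generating function of the shifted sequence. -/
def CMSeq (m : ℕ → ℝ) : Prop :=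
  EntireEGF m ∧ ∀ (k : ℕ) (x : ℝ), 0 ≤ x → 0 ≤ egf (fun n => m (n + k)) (-x)

lemma EntireEGF.summable {m : ℕ → ℝ} (hm : EntireEGF m) (x : ℝ) :
    Summable fun n : ℕ => m n * x ^ n / n.factorial := by
  refine Summable.of_norm ((hm |x| (abs_nonneg x)).congr fun n => ?_)
  simp

lemma EntireEGF.of_le {m m' : ℕ → ℝ} (hm : EntireEGF m) (h : ∀ n, |m' n| ≤ |m n|) :
    EntireEGF m' := fun r hr =>
  (hm r hr).of_nonneg_of_le (fun n => by positivity) (fun n => by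
    have := h n
    gcongr)

lemma EntireEGF.shift {m : ℕ → ℝ} (hm : EntireEGF m) : EntireEGF (fun n => m (n + 1)) := by
  intro r hr
  have h := (summable_nat_add_iff 1).2 (hm (2 * (r + 1)) (by positivity))
  refine h.of_nonneg_of_le (fun n => by positivity) (fun n => ?_)
  rw [Nat.factorial_succ, Nat.cast_mul, div_le_div_iff₀ (by positivity) (by positivity), mul_pow]
  have h1 : ((n + 1 : ℕ) : ℝ) ≤ 2 ^ (n + 1) := by exact_mod_cast (Nat.lt_two_pow_self).le
  have h2 : r ^ n ≤ (r + 1) ^ (n + 1) := by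
    calc r ^ n ≤ (r + 1) ^ n := by gcongr; linarith
      _ ≤ (r + 1) ^ (n + 1) := pow_le_pow_right₀ (by linarith) (by lia)
  calc |m (n + 1)| * r ^ n * (((n + 1 : ℕ) : ℝ) * n.factorial)
      = |m (n + 1)| * (((n + 1 : ℕ) : ℝ) * r ^ n) * n.factorial := by ring
    _ ≤ |m (n + 1)| * (2 ^ (n + 1) * (r + 1) ^ (n + 1)) * n.factorial := by gcongr

lemma EntireEGF.shift_add {m : ℕ → ℝ} (hm : EntireEGF m) (k : ℕ) :
    EntireEGF (fun n => m (n + k)) := by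
  induction k with
  | zero => simpa using hm
  | succ k ih => simpa [add_assoc, add_comm 1 k] using ih.shift

lemma EntireEGF.hasDerivAt {m : ℕ → ℝ} (hm : EntireEGF m) (x : ℝ) :
    HasDerivAt (egf m) (egf (fun n => m (n + 1)) x) x := by
  set R := |x| + 1
  have hR : 0 ≤ R := by positivity
  have hs := hm.shift R hR
  have hu : Summable fun n : ℕ => |m n| * (n * R ^ (n - 1)) / n.factorial := by
    refine (summable_nat_add_iff 1).1 (hs.congr fun n => ?_)
    rw [Nat.factorial_succ, Nat.add_sub_cancel]
    push_cast
    field_simp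
  have key := hasDerivAt_tsum_of_isPreconnected (𝕜 := ℝ) (t := Metric.ball (0 : ℝ) R)
    (g := fun (n : ℕ) y => m n * y ^ n / n.factorial)
    (g' := fun (n : ℕ) y => m n * (n * y ^ (n - 1)) / n.factorial) (y₀ := x) (y := x) hu
    Metric.isOpen_ball (convex_ball _ _).isPreconnected
    (fun n y _ => ((hasDerivAt_pow n y).const_mul _).div_const _)
    (fun n y hy => by
      have hy' : |y| ≤ R := by simpa using (Metric.mem_ball.1 hy).le
      rw [Real.norm_eq_abs, abs_div, abs_mul, abs_mul, abs_pow, Nat.abs_cast, Nat.abs_cast]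
      gcongr)
    (by simp [R]) (hm.summable x) (by simp [R])
  refine key.congr_deriv ?_
  have hsum : Summable fun n : ℕ => m n * (n * x ^ (n - 1)) / n.factorial := by
    refine Summable.of_norm (hu.of_nonneg_of_le (fun n => norm_nonneg _) fun n => ?_)
    rw [Real.norm_eq_abs, abs_div, abs_mul, abs_mul, abs_pow, Nat.abs_cast, Nat.abs_cast]
    gcongr
    simp [R]
  rw [hsum.tsum_eq_zero_add, egf]
  simp only [Nat.cast_zero, zero_mul, mul_zero, zero_div, zero_add]
  refine tsum_congr fun n => ?_
  rw [Nat.factorial_succ, Nat.add_sub_cancel]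
  push_cast
  field_simp

lemma EntireEGF.iteratedDeriv {m : ℕ → ℝ} (hm : EntireEGF m) (k : ℕ) :
    iteratedDeriv k (egf m) = egf (fun n => m (n + k)) := by
  induction k with
  | zero => simp
  | succ k ih =>
    rw [iteratedDeriv_succ, ih]
    funext x
    rw [((hm.shift_add k).hasDerivAt x).deriv]
    simp [add_assoc, add_comm 1 k]

/-! ### Operations preserving complete monotonicity -/

lemma cmSeq_one : CMSeq (fun _ => 1) := by
  refine ⟨fun r _ => by simpa using Real.summable_pow_div_factorial r, fun k x _ => ?_⟩
  have : egf (fun _ => 1) (-x) = Real.exp (-x) := by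
    rw [Real.exp_eq_exp_ℝ, NormedSpace.exp_eq_tsum_div]
    simp [egf]
  rw [this]
  positivity

lemma CMSeq.scale {m : ℕ → ℝ} (hm : CMSeq m) {c : ℝ} (hc : 0 ≤ c) :
    CMSeq (fun n => m n * c ^ n) := by
  refine ⟨fun r hr => (hm.1 (c * r) (by positivity)).congr fun n => ?_, fun k x hx => ?_⟩
  · rw [abs_mul, abs_of_nonneg (pow_nonneg hc n)]
    ring
  · have h := mul_nonneg (pow_nonneg hc k) (hm.2 k (c * x) (by positivity))
    rw [egf, ← tsum_mul_left] at h
    refine h.trans_eq (tsum_congr fun n => ?_)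
    beta_reduce
    rw [pow_add, neg_mul_eq_mul_neg, mul_pow]
    ring

/-- Multiplying by `1 / (n + j + 1) = ∫₀¹ tⁿ⁺ʲ dt` averages the generating function over dilations,
hence preserves complete monotonicity. -/
lemma CMSeq.div_add {m : ℕ → ℝ} (hm : CMSeq m) (j : ℕ) :
    CMSeq (fun n => m n / (n + j + 1)) := by
  refine ⟨hm.1.of_le fun n => ?_, fun k x hx => ?_⟩
  · rw [abs_div, abs_of_pos (by positivity : (0 : ℝ) < n + j + 1)]
    refine div_le_self (abs_nonneg _) ?_
    have : (0 : ℝ) ≤ n + j := by positivity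
    linarith
  · have hk := hm.1.shift_add k
    have key := intervalIntegral.hasSum_integral_of_dominated_convergence (a := 0) (b := 1)
      (μ := volume)
      (F := fun (n : ℕ) (t : ℝ) => t ^ (k + j) * (m (n + k) * (-(t * x)) ^ n / n.factorial))
      (f := fun t => t ^ (k + j) * egf (fun n => m (n + k)) (-(t * x)))
      (fun n _ => |m (n + k)| * x ^ n / n.factorial)
      (fun n => (by fun_prop : Continuous _).aestronglyMeasurable)
      (fun n => Filter.Eventually.of_forall fun t ht => by
        rw [Set.uIoc_of_le zero_le_one] at ht
        have ht0 := ht.1.le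
        have h1 : t ^ (k + j) ≤ 1 := pow_le_one₀ ht0 ht.2
        have h2 : t * x ≤ x := mul_le_of_le_one_left hx ht.2
        rw [Real.norm_eq_abs, abs_mul, abs_div, abs_mul, abs_pow, abs_pow, abs_neg,
          abs_of_nonneg ht0, abs_of_nonneg (mul_nonneg ht0 hx), Nat.abs_cast]
        calc t ^ (k + j) * (|m (n + k)| * (t * x) ^ n / n.factorial)
            ≤ 1 * (|m (n + k)| * x ^ n / n.factorial) := by gcongr
          _ = _ := one_mul _)
      (Filter.Eventually.of_forall fun t _ => hk x hx)
      intervalIntegrable_const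
      (Filter.Eventually.of_forall fun t _ => ((hk.summable _).hasSum).mul_left _)
    have hint : ∀ n : ℕ, (∫ t in (0 : ℝ)..1,
        t ^ (k + j) * (m (n + k) * (-(t * x)) ^ n / n.factorial)) =
        m (n + k) / ((n + k : ℕ) + j + 1) * (-x) ^ n / n.factorial := by
      intro n
      have : ∀ t : ℝ, t ^ (k + j) * (m (n + k) * (-(t * x)) ^ n / n.factorial) =
          t ^ (n + k + j) * (m (n + k) * (-x) ^ n / n.factorial) := by
        intro t
        rw [neg_mul_eq_mul_neg, mul_pow]
        ring
      simp_rw [this]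
      rw [intervalIntegral.integral_mul_const, integral_pow]
      push_cast
      simp
      ring
    simp_rw [hint] at key
    rw [egf, key.tsum_eq]
    refine intervalIntegral.integral_nonneg zero_le_one fun t ht => ?_
    exact mul_nonneg (pow_nonneg ht.1 _) (hm.2 k _ (mul_nonneg ht.1 hx))

/-- Convex combination of the sequence itself and the previous averaging, since
`(βn + j + 1) / (n + j + 1) = β + (1 - β) (j + 1) / (n + j + 1)`. -/
lemma CMSeq.factor {m : ℕ → ℝ} (hm : CMSeq m) {β : ℝ} (hβ0 : 0 ≤ β) (hβ1 : β ≤ 1) (j : ℕ) :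
    CMSeq (fun n => m n * ((β * n + 1 + j) / (n + 1 + j))) := by
  have hd := hm.div_add j
  refine ⟨hm.1.of_le fun n => ?_, fun k x hx => ?_⟩
  · rw [abs_mul]
    refine mul_le_of_le_one_right (abs_nonneg _) ?_
    rw [abs_of_nonneg (by positivity)]
    refine div_le_one_of_le₀ ?_ (by positivity)
    gcongr
    exact mul_le_of_le_one_left (by positivity) hβ1
  · have h1 := ((hm.1.shift_add k).summable (-x)).mul_left β
    have h2 := ((hd.1.shift_add k).summable (-x)).mul_left ((1 - β) * (j + 1))
    have e : egf (fun n => m (n + k) * ((β * (n + k : ℕ) + 1 + j) / ((n + k : ℕ) + 1 + j))) (-x) =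
        β * egf (fun n => m (n + k)) (-x) +
          (1 - β) * (j + 1) * egf (fun n => m (n + k) / ((n + k : ℕ) + j + 1)) (-x) := by
      simp only [egf]
      rw [← tsum_mul_left, ← tsum_mul_left, ← h1.tsum_add h2]
      refine tsum_congr fun n => ?_
      have : ((n + k : ℕ) : ℝ) + 1 + j ≠ 0 := by positivity
      have : ((n + k : ℕ) : ℝ) + j + 1 ≠ 0 := by positivity
      field_simp
      ring
    rw [e]
    have := hm.2 k x hx
    have := hd.2 k x hx
    have : 0 ≤ 1 - β := by linarith
    positivity

/-! ### Approximation of `n! / Γ(βn + 1)` -/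

/-- The approximants of `n! / Γ(βn + 1)` coming from Euler's limit formula for `Γ`. -/
def approxSeq (β : ℝ) (N n : ℕ) : ℝ :=
  (∏ j ∈ range (N + 1), (β * n + 1 + j) / (n + 1 + j)) * ((N : ℝ) ^ (1 - β)) ^ n

lemma cmSeq_approxSeq {β : ℝ} (hβ0 : 0 ≤ β) (hβ1 : β ≤ 1) (N : ℕ) : CMSeq (approxSeq β N) := by
  refine CMSeq.scale ?_ (by positivity)
  induction N + 1 with
  | zero => simpa using cmSeq_one
  | succ M ih => simpa only [prod_range_succ] using ih.factor hβ0 hβ1 M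

lemma tendsto_approxSeq {β : ℝ} (hβ0 : 0 < β) (n : ℕ) :
    Filter.Tendsto (fun N => approxSeq β N n) Filter.atTop
      (nhds (n.factorial / Real.Gamma (β * n + 1))) := by
  have hG : Real.Gamma (β * n + 1) ≠ 0 := (Real.Gamma_pos_of_pos (by positivity)).ne'
  have h := (Real.GammaSeq_tendsto_Gamma ((n : ℝ) + 1)).div
    (Real.GammaSeq_tendsto_Gamma (β * n + 1)) hG
  rw [Real.Gamma_nat_eq_factorial] at h
  refine h.congr' ?_
  filter_upwards [Filter.eventually_gt_atTop 0] with N hN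
  have hN' : (0 : ℝ) < N := by exact_mod_cast hN
  simp only [Pi.div_apply, Real.GammaSeq, approxSeq]
  rw [prod_div_distrib, ← Real.rpow_natCast, ← Real.rpow_mul hN'.le]
  have e : (N : ℝ) ^ ((n : ℝ) + 1) = (N : ℝ) ^ (β * n + 1) * (N : ℝ) ^ ((1 - β) * n) := by
    rw [← Real.rpow_add hN']
    ring_nf
  rw [e]
  have h1 : ∏ j ∈ range (N + 1), ((n : ℝ) + 1 + j) ≠ 0 := by positivity
  have h2 : ∏ j ∈ range (N + 1), (β * n + 1 + j) ≠ 0 := by positivity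
  field_simp

/-- Log-convexity of `Γ`: the slope of `log Γ` to the right of `y` is at least its slope
`log (y - 1)` on `[y - 1, y]`. -/
lemma rpow_mul_Gamma_le {y s : ℝ} (hy : 1 < y) (hs : 0 ≤ s) :
    (y - 1) ^ s * Real.Gamma y ≤ Real.Gamma (y + s) := by
  rcases hs.eq_or_lt with rfl | hs
  · simp
  have h := Real.convexOn_log_Gamma.slope_mono_adjacent (x := y - 1) (y := y) (z := y + s)
    (by simpa using hy) (by simp; linarith) (by linarith) (by linarith)
  have hy1 : 0 < y - 1 := by linarith
  have g0 := Real.Gamma_pos_of_pos hy1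
  have g1 := Real.Gamma_pos_of_pos (by linarith : 0 < y)
  have g2 := Real.Gamma_pos_of_pos (by linarith : 0 < y + s)
  have e : Real.Gamma y = (y - 1) * Real.Gamma (y - 1) := by
    simpa using Real.Gamma_add_one hy1.ne'
  have e' : Real.log (Real.Gamma y) - Real.log (Real.Gamma (y - 1)) = Real.log (y - 1) := by
    rw [e, Real.log_mul hy1.ne' g0.ne']
    ring
  simp only [Function.comp_apply, e', sub_sub_cancel, div_one, add_sub_cancel_left] at h
  rw [le_div_iff₀ hs] at h
  rw [← Real.log_le_log_iff (by positivity) g2, Real.log_mul (by positivity) g1.ne',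
    Real.log_rpow hy1]
  linarith

lemma Gamma_add_natCast_eq_prod {s : ℝ} (hs : 0 < s) (N : ℕ) :
    Real.Gamma (s + N) = (∏ j ∈ range N, (s + j)) * Real.Gamma s := by
  induction N with
  | zero => simp
  | succ N ih =>
    rw [prod_range_succ, Nat.cast_succ, ← add_assoc, Real.Gamma_add_one (by positivity), ih]
    ring

lemma approxSeq_nonneg {β : ℝ} (hβ0 : 0 ≤ β) (N n : ℕ) : 0 ≤ approxSeq β N n := by
  unfold approxSeq
  positivity

/-- The approximants stay below their limit, which serves as the dominating sequence. -/
lemma approxSeq_le {β : ℝ} (hβ0 : 0 < β) (hβ1 : β ≤ 1) (N n : ℕ) :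
    approxSeq β N n ≤ n.factorial / Real.Gamma (β * n + 1) := by
  have hG : 0 < Real.Gamma (β * n + 1) := Real.Gamma_pos_of_pos (by positivity)
  have a := Gamma_add_natCast_eq_prod (by positivity : 0 < β * n + 1) (N + 1)
  have b := Gamma_add_natCast_eq_prod (by positivity : 0 < (n : ℝ) + 1) (N + 1)
  rw [Real.Gamma_nat_eq_factorial] at b
  have hbn : 0 ≤ β * n := by positivity
  have hs : 0 ≤ (1 - β) * n := mul_nonneg (by linarith) (by positivity)
  have hN : (0 : ℝ) ≤ N := by positivity
  have c := rpow_mul_Gamma_le (y := β * n + 1 + (N + 1 : ℕ)) (s := (1 - β) * n)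
    (by push_cast; linarith) hs
  rw [show β * n + 1 + ((N + 1 : ℕ) : ℝ) + (1 - β) * n = (n : ℝ) + 1 + (N + 1 : ℕ) by ring, a, b]
    at c
  have d : (N : ℝ) ^ ((1 - β) * n) ≤ (β * n + 1 + (N + 1 : ℕ) - 1) ^ ((1 - β) * n) := by
    refine Real.rpow_le_rpow hN ?_ hs
    push_cast
    linarith
  rw [approxSeq, prod_div_distrib, ← Real.rpow_natCast, ← Real.rpow_mul hN, div_mul_eq_mul_div,
    div_le_div_iff₀ (by positivity) hG]
  have := mul_le_mul_of_nonneg_right d (by positivity :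
    0 ≤ (∏ j ∈ range (N + 1), (β * n + 1 + j)) * Real.Gamma (β * n + 1))
  nlinarith

/-- The moments `n! / Γ(βn + 1)` of the Mittag-Leffler distribution. -/
def mlSeq (β : ℝ) (n : ℕ) : ℝ := n.factorial / Real.Gamma (β * n + 1)

lemma mlSeq_pos {β : ℝ} (hβ0 : 0 < β) (n : ℕ) : 0 < mlSeq β n :=
  div_pos (by positivity) (Real.Gamma_pos_of_pos (by positivity))

lemma entireEGF_mlSeq {β : ℝ} (hβ0 : 0 < β) : EntireEGF (mlSeq β) := by
  intro r hr
  have hG : ∀ n : ℕ, 0 < Real.Gamma (β * n + 1) := fun n => Real.Gamma_pos_of_pos (by positivity)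
  have e : ∀ n : ℕ, |mlSeq β n| * r ^ n / n.factorial = r ^ n / Real.Gamma (β * n + 1) := by
    intro n
    rw [abs_of_pos (mlSeq_pos hβ0 n), mlSeq]
    have := (hG n).ne'
    field_simp
  simp_rw [e]
  -- ratio test: consecutive terms have ratio at most `r / (βn)^β`, which tends to `0`
  have ht : Filter.Tendsto (fun n : ℕ => (β * (n : ℝ)) ^ β) Filter.atTop Filter.atTop :=
    (tendsto_rpow_atTop hβ0).comp (tendsto_natCast_atTop_atTop.const_mul_atTop hβ0)
  refine summable_of_ratio_norm_eventually_le (r := 1 / 2) (by norm_num) ?_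
  filter_upwards [ht.eventually_ge_atTop (2 * r), Filter.eventually_gt_atTop 0] with n hn hn0
  have hn0' : (0 : ℝ) < n := by exact_mod_cast hn0
  have c := rpow_mul_Gamma_le (y := β * n + 1) (s := β) (by simp; positivity) hβ0.le
  rw [add_sub_cancel_right, show β * n + 1 + β = β * (n + 1 : ℕ) + 1 by push_cast; ring] at c
  have g := hG n
  have g' := hG (n + 1)
  rw [Real.norm_of_nonneg (by positivity), Real.norm_of_nonneg (by positivity), pow_succ,
    ← mul_div_assoc, div_le_div_iff₀ g' g]
  have := mul_le_mul_of_nonneg_right hn g.le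
  have h3 : 2 * r * Real.Gamma (β * n + 1) ≤ Real.Gamma (β * (n + 1 : ℕ) + 1) := this.trans c
  have := mul_le_mul_of_nonneg_left h3 (pow_nonneg hr n)
  linarith

/-- Complete monotonicity of `x ↦ E_β(-x)` for `0 < β ≤ 1`. -/
lemma cmSeq_mlSeq {β : ℝ} (hβ0 : 0 < β) (hβ1 : β ≤ 1) : CMSeq (mlSeq β) := by
  refine ⟨entireEGF_mlSeq hβ0, fun k x hx => ?_⟩
  have hs := (entireEGF_mlSeq hβ0).shift_add k x hx
  refine ge_of_tendsto' (tendsto_tsum_of_dominated_convergence (𝓕 := Filter.atTop)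
    (f := fun N n => approxSeq β N (n + k) * (-x) ^ n / n.factorial) hs (fun n => ?_)
    (Filter.Eventually.of_forall fun N n => ?_))
    (fun N => (cmSeq_approxSeq hβ0.le hβ1 N).2 k x hx)
  · exact ((tendsto_approxSeq hβ0 (n + k)).mul_const _).div_const _
  · rw [Real.norm_eq_abs, abs_div, abs_mul, abs_pow, abs_neg, abs_of_nonneg hx, Nat.abs_cast]
    have : |approxSeq β N (n + k)| ≤ |mlSeq β (n + k)| := by
      rw [abs_of_nonneg (approxSeq_nonneg hβ0.le _ _), abs_of_pos (mlSeq_pos hβ0 _)]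
      exact approxSeq_le hβ0 hβ1 _ _
    gcongr

/-! ### Taylor expansion and the Laplace transform -/

lemma mittagLefflerR_eq_egf (β : ℝ) : mittagLefflerR β = egf (mlSeq β) := by
  funext x
  refine tsum_congr fun n => ?_
  rw [mlSeq]
  field_simp

lemma mittagLeffler_eq_tsum (β : ℝ) (w : ℂ) :
    mittagLeffler β w = ∑' n : ℕ, (mlSeq β n : ℂ) * w ^ n / n.factorial := by
  refine tsum_congr fun n => ?_
  rw [mlSeq, Complex.Gamma_ofReal]
  push_cast
  have : (n.factorial : ℂ) ≠ 0 := by exact_mod_cast n.factorial_ne_zero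
  field_simp

lemma sum_antidiagonal_taylor {K : Type*} [Field K] [CharZero K] (c a b : K) (n : ℕ) :
    ∑ p ∈ antidiagonal n, c * (a ^ p.1 / p.1.factorial) * (b ^ p.2 / p.2.factorial) =
      c * (a + b) ^ n / n.factorial := by
  rw [(Commute.all a b).add_pow', mul_sum, sum_div]
  refine sum_congr rfl fun p hp => ?_
  obtain rfl := mem_antidiagonal.1 hp
  rw [nsmul_eq_mul, Nat.cast_add_choose]
  have := Nat.cast_ne_zero (R := K).2 (p.1 + p.2).factorial_ne_zero
  field_simp

/-- Absolute convergence of the double Taylor series, summed along antidiagonals. -/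
lemma EntireEGF.summable_double {m : ℕ → ℝ} (hm : EntireEGF m) (a b : ℂ) :
    Summable fun p : ℕ × ℕ =>
      (m (p.1 + p.2) : ℂ) * (a ^ p.1 / p.1.factorial) * (b ^ p.2 / p.2.factorial) := by
  refine Summable.of_norm ?_
  rw [← HasAntidiagonal.sigmaAntidiagonalEquivProd.summable_iff]
  rw [summable_sigma_of_nonneg (fun _ => by exact norm_nonneg _)]
  refine ⟨fun n => (hasSum_fintype _).summable, ?_⟩
  refine (hm (‖a‖ + ‖b‖) (by positivity)).congr fun n => ?_
  rw [tsum_fintype, ← sum_antidiagonal_taylor, ← sum_coe_sort (antidiagonal n)]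
  refine sum_congr rfl fun p _ => ?_
  simp [mem_antidiagonal.1 p.2]

/-- Taylor expansion of the generating function at a real point `b`, with complex increment `a`. -/
lemma EntireEGF.hasSum_taylor {m : ℕ → ℝ} (hm : EntireEGF m) (a : ℂ) (b : ℝ) :
    HasSum (fun k : ℕ => a ^ k / k.factorial * (egf (fun n => m (n + k)) b : ℂ))
      (∑' n : ℕ, (m n : ℂ) * (a + b) ^ n / n.factorial) := by
  have h := hm.summable_double a b
  have hrow : ∀ k : ℕ, HasSum (fun n : ℕ =>
      (m (k + n) : ℂ) * (a ^ k / k.factorial) * ((b : ℂ) ^ n / n.factorial))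
      (a ^ k / k.factorial * (egf (fun n => m (n + k)) b : ℂ)) := by
    intro k
    have := (Complex.hasSum_ofReal.2 ((hm.shift_add k).summable b).hasSum).mul_left
      (a ^ k / k.factorial)
    refine this.congr_fun ?_
    intro n
    rw [add_comm k n]
    push_cast
    ring
  have h1 := h.hasSum.prod_fiberwise hrow
  convert h1 using 1
  rw [← HasAntidiagonal.sigmaAntidiagonalEquivProd.tsum_eq]
  refine Eq.trans ?_ (Summable.tsum_sigma ((HasAntidiagonal.sigmaAntidiagonalEquivProd.summable_iff).2 h)).symm
  refine tsum_congr fun n => ?_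
  rw [tsum_fintype, ← sum_antidiagonal_taylor, ← sum_coe_sort (antidiagonal n)]
  refine sum_congr rfl fun p _ => ?_
  simp [mem_antidiagonal.1 p.2]

theorem stmt0 (lam β : ℝ) (hlam : 0 < lam) (hβ0 : 0 < β) (hβ1 : β ≤ 1) (z : ℂ) :
    (∫ x : ℝ, Complex.exp (z * x) ∂(fracPoisson lam β)) =
      (∑' k : ℕ, (Complex.exp z * lam) ^ k / (k.factorial : ℂ) *
        ((iteratedDeriv k (mittagLefflerR β) (-lam) : ℝ) : ℂ)) ∧
    (∫ x : ℝ, Complex.exp (z * x) ∂(fracPoisson lam β)) =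
      mittagLeffler β (lam * (Complex.exp z - 1)) := by
  have hcm := cmSeq_mlSeq hβ0 hβ1
  have hD : ∀ k, 0 ≤ iteratedDeriv k (mittagLefflerR β) (-lam) := fun k => by
    rw [mittagLefflerR_eq_egf, hcm.1.iteratedDeriv]
    exact hcm.2 k lam hlam.le
  have hw : ∀ k : ℕ, 0 ≤ lam ^ k / k.factorial * iteratedDeriv k (mittagLefflerR β) (-lam) :=
    fun k => mul_nonneg (by positivity) (hD k)
  have hT : HasSum (fun k : ℕ => (Complex.exp z * lam) ^ k / (k.factorial : ℂ) *
      ((iteratedDeriv k (mittagLefflerR β) (-lam) : ℝ) : ℂ))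
      (mittagLeffler β (lam * (Complex.exp z - 1))) := by
    have := hcm.1.hasSum_taylor (Complex.exp z * lam) (-lam)
    rw [mittagLeffler_eq_tsum]
    simp_rw [mittagLefflerR_eq_egf, hcm.1.iteratedDeriv]
    convert this using 6
    push_cast
    ring
  -- the `k`-th atom contributes the `k`-th term of the Taylor series
  have hterm : ∀ k : ℕ,
      ((lam ^ k / k.factorial * iteratedDeriv k (mittagLefflerR β) (-lam) : ℝ) : ℂ) *
        Complex.exp (z * ((k : ℝ) : ℂ)) = (Complex.exp z * lam) ^ k / (k.factorial : ℂ) *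
        ((iteratedDeriv k (mittagLefflerR β) (-lam) : ℝ) : ℂ) := by
    intro k
    rw [Complex.ofReal_natCast, mul_comm z, Complex.exp_nat_mul]
    push_cast
    ring
  have hint : Integrable (fun x : ℝ => Complex.exp (z * x)) (fracPoisson lam β) := by
    refine integrable_sum_dirac (fun k => ENNReal.ofReal_ne_top) ?_
    refine hT.summable.norm.congr fun k => ?_
    rw [← hterm k, norm_mul, Complex.norm_of_nonneg (hw k), ENNReal.toReal_ofReal (hw k)]
  have hI : (∫ x : ℝ, Complex.exp (z * x) ∂(fracPoisson lam β)) =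
      ∑' k : ℕ, (Complex.exp z * lam) ^ k / (k.factorial : ℂ) *
        ((iteratedDeriv k (mittagLefflerR β) (-lam) : ℝ) : ℂ) := by
    rw [fracPoisson] at hint ⊢
    rw [integral_sum_measure hint]
    refine tsum_congr fun k => ?_
    rw [integral_smul_measure, integral_dirac, ENNReal.toReal_ofReal (hw k), ← hterm k,
      Complex.real_smul]
  exact ⟨hI, hI.trans hT.tsum_eq⟩
end
end

section
/- Let λ > 0 and β ∈ (0,1], and let ν_β be a probability measure on [0,∞) whose Laplace transform satisfies ∫_0^∞ e^{−zτ} dν_β(τ) = E_β(−z) for all z ≥ 0. Then the fractional Poisson measure π_{λ,β} is the mixture of Poisson measures π_{λ,β} = ∫_0^∞ π_{λτ} dν_β(τ); equivalently, for every k ∈ ℕ₀, (λ^k/k!) E_β^{(k)}(−λ) = ∫_0^∞ ((λτ)^k/k!) e^{−λτ} dν_β(τ). -/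
/-!
For `x < 0` the hypothesis on the Laplace transform says that the Mittag-Leffler function agrees
with the moment generating function `x ↦ ∫ exp (x τ) dν(τ)`. Since `ν` lives on `[0, ∞)`, every
`x ≤ 0` has an integrable exponential, so `-λ` is interior to the domain of the moment generating
function and one may differentiate under the integral sign: `E_β⁽ᵏ⁾(-λ) = ∫ τᵏ exp (-λ τ) dν(τ)`.
This is the identity of weights; the identity of measures follows by exchanging the sum over `k`
with the integral against `ν` (Tonelli).
-/

open MeasureTheory Finset
open scoped ENNReal NNReal

noncomputable section

/-- For a measure on `[0, ∞)`, every `-lam` with `lam > 0` is interior to the set of exponents `t`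
for which `exp (t τ)` is integrable. -/
lemma neg_mem_interior_integrableExpSet {lam : ℝ} (hlam : 0 < lam)
    (ν : Measure ℝ) [IsProbabilityMeasure ν] (hpos : ∀ᵐ τ ∂ν, 0 ≤ τ) :
    -lam ∈ interior (ProbabilityTheory.integrableExpSet id ν) := by
  refine mem_interior.2 ⟨Set.Iio 0, fun t ht => ?_, isOpen_Iio, by simpa using hlam⟩
  have ht' : t < 0 := ht
  change Integrable (fun τ : ℝ => Real.exp (t * τ)) ν
  refine (integrable_const (1 : ℝ)).mono' (by fun_prop) ?_
  filter_upwards [hpos] with τ hτ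
  rw [Real.norm_eq_abs, Real.abs_exp, Real.exp_le_one_iff]
  nlinarith

/-- Differentiation under the integral sign in the Laplace transform of `ν`. -/
lemma iteratedDeriv_mittagLefflerR_neg {lam β : ℝ} (hlam : 0 < lam)
    (ν : Measure ℝ) [IsProbabilityMeasure ν] (hpos : ∀ᵐ τ ∂ν, 0 ≤ τ)
    (hLT : ∀ z : ℝ, 0 ≤ z → ∫ τ, Real.exp (-z * τ) ∂ν = mittagLefflerR β (-z)) (k : ℕ) :
    iteratedDeriv k (mittagLefflerR β) (-lam) = ∫ τ, τ ^ k * Real.exp (-lam * τ) ∂ν := by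
  have heq : mittagLefflerR β =ᶠ[nhds (-lam)] ProbabilityTheory.mgf id ν := by
    filter_upwards [Iio_mem_nhds (show -lam < 0 by linarith)] with x hx
    have hx' : x < 0 := hx
    have h := hLT (-x) (by linarith)
    rw [neg_neg] at h
    rw [← h]
    rfl
  rw [heq.iteratedDeriv_eq k, ProbabilityTheory.iteratedDeriv_mgf
    (neg_mem_interior_integrableExpSet hlam ν hpos) k]
  rfl

lemma measurable_poissonMeasureR (lam : ℝ) :
    Measurable fun τ : ℝ => poissonMeasureR (lam * τ) := by
  refine Measure.measurable_of_measurable_coe _ fun s hs => ?_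
  simp only [poissonMeasureR, Measure.sum_apply _ hs, Measure.smul_apply, smul_eq_mul]
  fun_prop

theorem stmt1 (lam β : ℝ) (hlam : 0 < lam) (hβ0 : 0 < β) (hβ1 : β ≤ 1)
    (ν : Measure ℝ) [IsProbabilityMeasure ν] (hsupp : ν {x | x < 0} = 0)
    (hLT : ∀ z : ℝ, 0 ≤ z → ∫ τ, Real.exp (-z * τ) ∂ν = mittagLefflerR β (-z)) :
    fracPoisson lam β = ν.bind (fun τ => poissonMeasureR (lam * τ)) ∧
    ∀ k : ℕ, lam ^ k / k.factorial * iteratedDeriv k (mittagLefflerR β) (-lam) =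
      ∫ τ, (lam * τ) ^ k / k.factorial * Real.exp (-(lam * τ)) ∂ν := by
  have hpos : ∀ᵐ τ ∂ν, 0 ≤ τ := by
    rw [ae_iff]
    simpa using hsupp
  have hweight (k : ℕ) (τ : ℝ) : (lam * τ) ^ k / k.factorial * Real.exp (-(lam * τ)) =
      lam ^ k / k.factorial * (τ ^ k * Real.exp (-lam * τ)) := by
    rw [mul_pow, neg_mul]
    ring
  have hk (k : ℕ) : lam ^ k / k.factorial * iteratedDeriv k (mittagLefflerR β) (-lam) =
      ∫ τ, (lam * τ) ^ k / k.factorial * Real.exp (-(lam * τ)) ∂ν := by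
    simp_rw [hweight k]
    rw [integral_const_mul, iteratedDeriv_mittagLefflerR_neg hlam ν hpos hLT k]
  refine ⟨?_, hk⟩
  have hint (k : ℕ) :
      Integrable (fun τ : ℝ => (lam * τ) ^ k / k.factorial * Real.exp (-(lam * τ))) ν := by
    simp_rw [hweight k]
    exact (ProbabilityTheory.integrable_pow_mul_exp_of_mem_interior_integrableExpSet
      (neg_mem_interior_integrableExpSet hlam ν hpos) k).const_mul _
  ext s hs
  rw [Measure.bind_apply hs (measurable_poissonMeasureR lam).aemeasurable]
  simp only [fracPoisson, poissonMeasureR, Measure.sum_apply _ hs, Measure.smul_apply, smul_eq_mul]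
  rw [lintegral_tsum fun k => by fun_prop]
  refine tsum_congr fun k => ?_
  rw [lintegral_mul_const _ (by fun_prop), hk k,
    ofReal_integral_eq_lintegral_ofReal (hint k)]
  filter_upwards [hpos] with τ hτ
  simp only [Pi.zero_apply]
  positivity
end
end

section
/- Let λ > 0 and β ∈ (0,1]. The fractional Poisson measure π_{λ,β} has moments of all orders, and for every n ∈ ℕ₀ its n-th moment is M_{λ,β}(n) := ∫_ℝ x^n dπ_{λ,β}(x) = ∑_{m=0}^n (m!/Γ(mβ + 1)) S(n,m) λ^m, where S(n,m) are the Stirling numbers of the second kind. -/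
/-!
The weights of `fracPoisson` are truncated at zero by `ENNReal.ofReal`, so the moment formula rests
on the nonnegativity of `E_β⁽ᵏ⁾(-lam)`, i.e. on the complete monotonicity of `x ↦ E_β(-x)`.

This is obtained by discretising the Laplace transform identity
`∫ e^(-pt) t^(βk) E_β⁽ᵏ⁾(-x t^β) dt = k! p^(β-1) / (p^β + x)^(k+1)`, with `1 - z` in the place of `p`.
For `0 < β ≤ 1` the series `(1 - z)^β = 1 - B(z)` has `B ≥ 0` coefficientwise and `(1 - z)^(β - 1)` has
nonnegative coefficients, hence so has `(1 - z)^(β - 1) / (1 + μ - B(z))^(k + 1)`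
(`resolventCoeff_nonneg`). Expanding this quotient in powers of `μ = x / N^β` and letting `N → ∞` in
the coefficient of `z^N`, Euler's limit for the Gamma function and dominated convergence give
`E_β⁽ᵏ⁾(-x) / k!` as a limit of nonnegative numbers (`tsum_choose_Gamma_inv_nonneg`).

For the moments, `E_β` is an entire function with Taylor coefficients `1 / Γ(βm + 1)`; rearranging an
absolutely convergent double series shows that the `m`-th binomial moment is `lam^m / Γ(βm + 1)`
(`hasSum_choose_mul`). Finally `k^n = ∑ₘ m! S(n, m) C(k, m)` (`pow_eq_sum_stirlingSnd`).
-/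

open MeasureTheory Finset
open scoped ENNReal NNReal

noncomputable section

open Filter Topology

/-! ### Coefficients of `(1 - z)^(-s)` -/

/-- The coefficient of `z ^ N` in `(1 - z) ^ (-s)`, that is `s (s + 1) ⋯ (s + N - 1) / N!`. -/
def risingCoeff (s : ℝ) (N : ℕ) : ℝ := ∏ i ∈ range N, (s + i) / (i + 1)

lemma risingCoeff_zero (s : ℝ) : risingCoeff s 0 = 1 := by simp [risingCoeff]

lemma risingCoeff_succ (s : ℝ) (N : ℕ) :
    ((N : ℝ) + 1) * risingCoeff s (N + 1) = (s + N) * risingCoeff s N := by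
  have h : (N : ℝ) + 1 ≠ 0 := by positivity
  rw [risingCoeff, prod_range_succ, ← risingCoeff]
  field_simp

lemma risingCoeff_nonneg {s : ℝ} (hs : 0 ≤ s) (N : ℕ) : 0 ≤ risingCoeff s N :=
  prod_nonneg fun i _ => by positivity

/-- For `0 ≤ β ≤ 1`, all coefficients of `(1 - z) ^ β` beyond the constant one are nonpositive. -/
lemma risingCoeff_neg_succ_nonpos {β : ℝ} (h0 : 0 ≤ β) (h1 : β ≤ 1) (N : ℕ) :
    risingCoeff (-β) (N + 1) ≤ 0 := by
  rw [risingCoeff, prod_range_succ']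
  refine mul_nonpos_of_nonneg_of_nonpos (prod_nonneg fun i _ => ?_) (by simpa using h0)
  have : (0 : ℝ) ≤ i := i.cast_nonneg
  push_cast
  exact div_nonneg (by linarith) (by linarith)

/-- The identity `(1 - z) ^ (-s) * (1 - z) ^ (-t) = (1 - z) ^ (-(s + t))`, coefficientwise. -/
lemma sum_risingCoeff_mul (s t : ℝ) (N : ℕ) :
    ∑ p ∈ antidiagonal N, risingCoeff s p.1 * risingCoeff t p.2 = risingCoeff (s + t) N := by
  induction N with
  | zero => simp [risingCoeff_zero]
  | succ N ih =>
    have hN : (N : ℝ) + 1 ≠ 0 := by positivity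
    apply mul_left_cancel₀ hN
    rw [risingCoeff_succ, ← ih]
    have e1 : ((N : ℝ) + 1) * ∑ p ∈ antidiagonal (N + 1), risingCoeff s p.1 * risingCoeff t p.2
        = ∑ p ∈ antidiagonal (N + 1), (p.1 : ℝ) * risingCoeff s p.1 * risingCoeff t p.2
        + ∑ p ∈ antidiagonal (N + 1), risingCoeff s p.1 * ((p.2 : ℝ) * risingCoeff t p.2) := by
      rw [mul_sum, ← sum_add_distrib]
      refine sum_congr rfl fun p hp => ?_
      have : (p.1 : ℝ) + p.2 = N + 1 := by exact_mod_cast mem_antidiagonal.1 hp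
      rw [← this]; ring
    rw [e1, Finset.Nat.sum_antidiagonal_succ, Finset.Nat.sum_antidiagonal_succ' (n := N)]
    simp only [Nat.cast_zero, zero_mul, mul_zero, zero_add, Nat.cast_add, Nat.cast_one,
      risingCoeff_succ]
    rw [← sum_add_distrib, mul_sum]
    refine sum_congr rfl fun p hp => ?_
    have : (p.1 : ℝ) + p.2 = N := by exact_mod_cast mem_antidiagonal.1 hp
    rw [← this]; ring

lemma risingCoeff_add_one_le_pow {s : ℝ} (hs : 0 ≤ s) (N : ℕ) :
    risingCoeff (s + 1) N ≤ (1 + s) ^ N := by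
  rw [risingCoeff]
  refine (prod_le_prod (g := fun _ => 1 + s) (fun i _ => by positivity) fun i _ => ?_).trans
    (by simp)
  have : (0 : ℝ) ≤ i := i.cast_nonneg
  rw [div_le_iff₀ (by positivity)]
  nlinarith [mul_nonneg hs this]

/-- The factor `(1 + s) ^ K` accounts for the first `K` factors of the product; each later factor
`1 + s / (N + 1)` is at most `((N + 1) / N) ^ s`. -/
lemma risingCoeff_add_one_le {s : ℝ} (hs : 0 ≤ s) {K N : ℕ} (hK : 1 ≤ K) (hN : K ≤ N) :
    risingCoeff (s + 1) N ≤ (1 + s) ^ K * ((N : ℝ) / K) ^ s := by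
  induction N, hN using Nat.le_induction with
  | base =>
    have : (K : ℝ) ≠ 0 := by positivity
    simpa [div_self this] using risingCoeff_add_one_le_pow hs K
  | succ N hN ih =>
    have hNpos : (0 : ℝ) < N := by exact_mod_cast (by omega : 0 < N)
    have hKpos : (0 : ℝ) < K := by exact_mod_cast hK
    have hstep : (s + 1 + N) / ((N : ℝ) + 1) ≤ (((N : ℝ) + 1) / N) ^ s := by
      have hpos : (0 : ℝ) < ((N : ℝ) + 1) / N := by positivity
      have hlog : 1 / ((N : ℝ) + 1) ≤ Real.log (((N : ℝ) + 1) / N) := by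
        refine le_trans (le_of_eq ?_) (Real.one_sub_inv_le_log_of_pos hpos)
        field_simp
        ring
      rw [Real.rpow_def_of_pos hpos]
      refine le_trans ?_ (Real.add_one_le_exp _)
      have := mul_le_mul_of_nonneg_right hlog hs
      refine le_trans (le_of_eq ?_) (add_le_add_left this 1)
      field_simp
      ring
    have hsplit : (((N + 1 : ℕ) : ℝ) / K) ^ s = ((N : ℝ) / K) ^ s * (((N : ℝ) + 1) / N) ^ s := by
      rw [← Real.mul_rpow (by positivity) (by positivity)]
      congr 1
      push_cast
      field_simp
    rw [risingCoeff, prod_range_succ, ← risingCoeff, hsplit, ← mul_assoc]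
    exact mul_le_mul ih hstep (by positivity) (by positivity)

/-- Euler's limit formula for the Gamma function. -/
lemma tendsto_risingCoeff {s : ℝ} (hs : 0 ≤ s) :
    Tendsto (fun N : ℕ => risingCoeff (s + 1) N / (N : ℝ) ^ s) atTop
      (𝓝 (Real.Gamma (s + 1))⁻¹) := by
  rcases hs.eq_or_lt with rfl | hs
  · have : ∀ N, risingCoeff (0 + 1) N = 1 := fun N =>
      prod_eq_one fun i _ => by rw [zero_add, add_comm, div_self (by positivity)]
    simp_rw [this]
    simp
  · rw [Real.Gamma_add_one hs.ne']
    have hG := ((Real.GammaSeq_tendsto_Gamma s).const_mul s).inv₀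
      (mul_pos hs (Real.Gamma_pos_of_pos hs)).ne'
    refine hG.congr' ?_
    filter_upwards [eventually_gt_atTop 0] with N hN
    have hN' : (0 : ℝ) < N := by exact_mod_cast hN
    have h1 : (0 : ℝ) < (N : ℝ) ^ s := by positivity
    rw [Real.GammaSeq, risingCoeff, prod_range_succ', prod_div_distrib]
    have h2 : ∏ i ∈ range N, ((i : ℝ) + 1) = N.factorial := by
      rw [← prod_range_add_one_eq_factorial]; push_cast; rfl
    have h3 : ∏ i ∈ range N, (s + ((i + 1 : ℕ) : ℝ)) = ∏ i ∈ range N, (s + 1 + i) :=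
      prod_congr rfl fun i _ => by push_cast; ring
    have h4 : ∏ i ∈ range N, (s + 1 + (i : ℝ)) ≠ 0 := prod_ne_zero_iff.2 fun i _ => by positivity
    have h5 : (N.factorial : ℝ) ≠ 0 := by positivity
    rw [h2, h3]
    simp only [Nat.cast_zero, add_zero]
    field_simp

/-! ### Growth of the Mittag-Leffler coefficients -/

lemma summable_choose_mul_pow (k K : ℕ) {q : ℝ} (hq0 : 0 < q) (hq1 : q < 1) :
    Summable fun j : ℕ => ((k + j).choose k : ℝ) * (1 + ((k + j : ℕ) : ℝ)) ^ K * q ^ j := by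
  have h0 : Summable fun n : ℕ => (n : ℝ) ^ (k + K) * q ^ n :=
    summable_pow_mul_geometric_of_norm_lt_one _ (by rwa [Real.norm_of_nonneg hq0.le])
  have h1 := ((summable_nat_add_iff (1 + k)).2 h0).mul_right (q ^ (1 + k))⁻¹
  refine Summable.of_nonneg_of_le (fun j => by positivity) (fun j => ?_) h1
  have hc : ((k + j).choose k : ℝ) ≤ (1 + ((k + j : ℕ) : ℝ)) ^ k := by
    have : (k + j).choose k ≤ (1 + (k + j)) ^ k :=
      (Nat.choose_le_pow _ _).trans (Nat.pow_le_pow_left (by omega) _)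
    exact_mod_cast this
  calc ((k + j).choose k : ℝ) * (1 + ((k + j : ℕ) : ℝ)) ^ K * q ^ j
      ≤ (1 + ((k + j : ℕ) : ℝ)) ^ k * (1 + ((k + j : ℕ) : ℝ)) ^ K * q ^ j := by gcongr
    _ = _ := by
      rw [← pow_add, pow_add q]
      push_cast
      field_simp
      ring

lemma exists_nat_mul_rpow_neg_lt_one {β : ℝ} (hβ : 0 < β) (x : ℝ) :
    ∃ K : ℕ, 1 ≤ K ∧ x * (K : ℝ) ^ (-β) < 1 := by
  have h := ((tendsto_rpow_neg_atTop hβ).comp tendsto_natCast_atTop_atTop).const_mul x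
  rw [mul_zero] at h
  obtain ⟨K, hK, hK1⟩ := ((h.eventually_lt_const one_pos).and (eventually_ge_atTop 1)).exists
  exact ⟨K, hK1, hK⟩

/-- The normalised coefficients of `(1 - z) ^ (-(β m + 1))` are bounded uniformly in `N ≥ K`. -/
lemma risingCoeff_div_le {β : ℝ} (h0 : 0 < β) (h1 : β ≤ 1) {K N : ℕ} (hK : 1 ≤ K) (hN : K ≤ N)
    (m : ℕ) : risingCoeff (β * m + 1) N / (N : ℝ) ^ (β * m)
      ≤ (1 + (m : ℝ)) ^ K * ((K : ℝ) ^ (-β)) ^ m := by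
  have hKpos : (0 : ℝ) < K := by exact_mod_cast hK
  have hNpos : (0 : ℝ) < N := by exact_mod_cast (by omega : 0 < N)
  have hs : 0 ≤ β * m := by positivity
  have hle : β * m ≤ m := mul_le_of_le_one_left m.cast_nonneg h1
  rw [div_le_iff₀ (by positivity)]
  refine (risingCoeff_add_one_le hs hK hN).trans ?_
  have e : ((K : ℝ) ^ (-β)) ^ m = ((K : ℝ) ^ (β * m))⁻¹ := by
    rw [← Real.rpow_mul_natCast hKpos.le, neg_mul, Real.rpow_neg hKpos.le]
  rw [Real.div_rpow hNpos.le hKpos.le, e, mul_assoc, div_eq_inv_mul]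
  gcongr

lemma Gamma_inv_le {β : ℝ} (h0 : 0 < β) (h1 : β ≤ 1) {K : ℕ} (hK : 1 ≤ K) (m : ℕ) :
    (Real.Gamma (β * m + 1))⁻¹ ≤ (1 + (m : ℝ)) ^ K * ((K : ℝ) ^ (-β)) ^ m := by
  refine le_of_tendsto (tendsto_risingCoeff (s := β * m) (by positivity)) ?_
  filter_upwards [eventually_ge_atTop K] with N hN using risingCoeff_div_le h0 h1 hK hN m

lemma Gamma_inv_pos {β : ℝ} (h0 : 0 < β) (m : ℕ) : 0 < (Real.Gamma (β * m + 1))⁻¹ :=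
  inv_pos.2 (Real.Gamma_pos_of_pos (by positivity))

/-- The Mittag-Leffler series has infinite radius of convergence. -/
lemma summable_Gamma_inv {β : ℝ} (h0 : 0 < β) (h1 : β ≤ 1) {R : ℝ} (hR : 0 < R) :
    Summable fun m : ℕ => |(Real.Gamma (β * m + 1))⁻¹| * R ^ m := by
  obtain ⟨K, hK, hKR⟩ := exists_nat_mul_rpow_neg_lt_one h0 R
  have hKpos : (0 : ℝ) < K := by exact_mod_cast hK
  have := summable_choose_mul_pow 0 K (q := R * (K : ℝ) ^ (-β)) (by positivity) hKR
  refine Summable.of_nonneg_of_le (fun m => by positivity) (fun m => ?_) this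
  rw [abs_of_pos (Gamma_inv_pos h0 m)]
  calc _ ≤ (1 + (m : ℝ)) ^ K * ((K : ℝ) ^ (-β)) ^ m * R ^ m := by
        gcongr
        exact Gamma_inv_le h0 h1 hK m
    _ = _ := by simp only [Nat.choose_zero_right, zero_add, Nat.cast_one, one_mul, mul_pow]; ring

/-! ### Complete monotonicity -/

/-- If `W` has constant coefficient `1` and all other coefficients nonpositive, and
`(W + μ) P = Q` with `Q ≥ 0` coefficientwise, then `P ≥ 0` coefficientwise. -/
lemma nonneg_of_conv_nonneg {w P Q : ℕ → ℝ} {μ : ℝ} (hw0 : w 0 = 1) (hw : ∀ i, w (i + 1) ≤ 0)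
    (hμ : 0 ≤ μ) (hQ : ∀ N, 0 ≤ Q N)
    (h : ∀ N, ∑ p ∈ antidiagonal N, w p.1 * P p.2 + μ * P N = Q N) (N : ℕ) : 0 ≤ P N := by
  induction N using Nat.strong_induction_on with
  | _ N ih =>
    have hN := h N
    rw [Finset.Nat.sum_antidiagonal_eq_sum_range_succ (fun i j => w i * P j), sum_range_succ',
      hw0, one_mul, Nat.sub_zero] at hN
    have hneg : ∑ i ∈ range N, w (i + 1) * P (N - (i + 1)) ≤ 0 :=
      sum_nonpos fun i hi => mul_nonpos_of_nonpos_of_nonneg (hw i)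
        (ih _ (by have := mem_range.1 hi; omega))
    have : 0 ≤ (1 + μ) * P N := by nlinarith [hQ N]
    exact nonneg_of_mul_nonneg_right this (by linarith)

/-- The coefficient of `z ^ N` in
`(1 - z) ^ (β - 1) / ((1 - z) ^ β + μ) ^ (k + 1) = ∑ⱼ C(k + j, k) (-μ)ʲ (1 - z) ^ (-β (k + j) - 1)`,
expressed through the right-hand side. -/
def resolventCoeff (β μ : ℝ) (k N : ℕ) : ℝ :=
  ∑' j : ℕ, ((k + j).choose k : ℝ) * (-μ) ^ j * risingCoeff (β * (k + j : ℕ) + 1) N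

lemma summable_resolventCoeff {β μ : ℝ} (h0 : 0 < β) (h1 : β ≤ 1) (hμ0 : 0 < μ) (hμ1 : μ < 1)
    (k N : ℕ) : Summable fun j : ℕ =>
      ((k + j).choose k : ℝ) * (-μ) ^ j * risingCoeff (β * (k + j : ℕ) + 1) N := by
  refine Summable.of_norm_bounded (summable_choose_mul_pow k N hμ0 hμ1) fun j => ?_
  have hs : 0 ≤ β * ((k + j : ℕ) : ℝ) := by positivity
  have hle : β * ((k + j : ℕ) : ℝ) ≤ ((k + j : ℕ) : ℝ) := mul_le_of_le_one_left (by positivity) h1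
  rw [norm_mul, norm_mul, norm_pow, norm_neg, Real.norm_of_nonneg hμ0.le,
    Real.norm_of_nonneg (Nat.cast_nonneg _), Real.norm_of_nonneg (risingCoeff_nonneg (by linarith) _),
    mul_right_comm]
  gcongr
  refine (risingCoeff_add_one_le_pow hs N).trans ?_
  gcongr

/-- Multiplication of the series `∑_N resolventCoeff β μ k N z ^ N` by `(1 - z) ^ β`. -/
lemma conv_resolventCoeff {β μ : ℝ} (h0 : 0 < β) (h1 : β ≤ 1) (hμ0 : 0 < μ) (hμ1 : μ < 1)
    (k N : ℕ) : HasSum (fun j : ℕ => ((k + j).choose k : ℝ) * (-μ) ^ j *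
        risingCoeff (β * (k + j : ℕ) + 1 - β) N)
      (∑ p ∈ antidiagonal N, risingCoeff (-β) p.1 * resolventCoeff β μ k p.2) := by
  have := hasSum_sum (s := antidiagonal N) fun p _ =>
    ((summable_resolventCoeff h0 h1 hμ0 hμ1 k p.2).hasSum).mul_left (risingCoeff (-β) p.1)
  refine this.congr_fun ?_
  intro j
  rw [show β * ((k + j : ℕ) : ℝ) + 1 - β = -β + (β * ((k + j : ℕ) : ℝ) + 1) by ring,
    ← sum_risingCoeff_mul, mul_sum]
  exact sum_congr rfl fun p _ => by ring

lemma resolventCoeff_nonneg {β μ : ℝ} (h0 : 0 < β) (h1 : β ≤ 1) (hμ0 : 0 < μ) (hμ1 : μ < 1)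
    (k N : ℕ) : 0 ≤ resolventCoeff β μ k N := by
  induction k generalizing N with
  | zero =>
    refine nonneg_of_conv_nonneg (risingCoeff_zero (-β)) (risingCoeff_neg_succ_nonpos h0.le h1)
      hμ0.le (Q := risingCoeff (1 - β)) (risingCoeff_nonneg (by linarith)) (fun N => ?_) N
    have hA := conv_resolventCoeff h0 h1 hμ0 hμ1 0 N
    have hB := (summable_resolventCoeff h0 h1 hμ0 hμ1 0 N).hasSum
    rw [← hA.tsum_eq, hA.summable.tsum_eq_zero_add, resolventCoeff, ← tsum_mul_left, add_assoc,
      ← Summable.tsum_add ((summable_nat_add_iff 1).2 hA.summable) (hB.summable.mul_left μ)]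
    simp only [zero_add, Nat.choose_zero_right, Nat.cast_one, one_mul, Nat.cast_zero, mul_zero,
      pow_zero]
    convert add_zero _
    convert tsum_zero with j
    rw [show β * ((j + 1 : ℕ) : ℝ) + 1 - β = β * j + 1 by push_cast; ring]
    ring
  | succ k ih =>
    refine nonneg_of_conv_nonneg (risingCoeff_zero (-β)) (risingCoeff_neg_succ_nonpos h0.le h1)
      hμ0.le (Q := resolventCoeff β μ k) ih (fun N => ?_) N
    have hA := conv_resolventCoeff h0 h1 hμ0 hμ1 (k + 1) N
    have hB := (summable_resolventCoeff h0 h1 hμ0 hμ1 (k + 1) N).hasSum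
    have hC := (summable_resolventCoeff h0 h1 hμ0 hμ1 k N).hasSum
    rw [← hA.tsum_eq, hA.summable.tsum_eq_zero_add, resolventCoeff, ← tsum_mul_left, add_assoc,
      ← Summable.tsum_add ((summable_nat_add_iff 1).2 hA.summable) (hB.summable.mul_left μ),
      resolventCoeff, hC.summable.tsum_eq_zero_add]
    congr 1
    · simp only [add_zero, Nat.choose_self, pow_zero]
      congr 2
      push_cast
      ring
    · refine tsum_congr fun j => ?_
      -- Pascal's rule `C(k + 2 + j, k + 1) = C(k + 1 + j, k) + C(k + 1 + j, k + 1)`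
      have hP : (((k + 1 + (j + 1)).choose (k + 1) : ℕ) : ℝ)
          = (k + (j + 1)).choose k + (k + 1 + j).choose (k + 1) := by
        rw [show k + 1 + (j + 1) = (k + (j + 1)) + 1 by ring, Nat.choose_succ_succ,
          show k + 1 + j = k + (j + 1) by ring]
        push_cast; rfl
      rw [hP, show β * ((k + 1 + (j + 1) : ℕ) : ℝ) + 1 - β = β * ((k + (j + 1) : ℕ) : ℝ) + 1 by
          push_cast; ring,
        show k + 1 + j = k + (j + 1) by ring]
      ring

/-- Complete monotonicity of `x ↦ E_β(-x)`, on the level of power series: the sum is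
`E_β⁽ᵏ⁾(-x) / k!`, and it is the limit of the rescaled nonnegative coefficients
`resolventCoeff β (x / N ^ β) k N / N ^ (β k)`. -/
lemma tsum_choose_Gamma_inv_nonneg {β x : ℝ} (h0 : 0 < β) (h1 : β ≤ 1) (hx : 0 < x) (k : ℕ) :
    0 ≤ ∑' j : ℕ, ((k + j).choose k : ℝ) * (Real.Gamma (β * (k + j : ℕ) + 1))⁻¹ * (-x) ^ j := by
  obtain ⟨K, hK, hKx⟩ := exists_nat_mul_rpow_neg_lt_one h0 x
  have hKpos : (0 : ℝ) < K := by exact_mod_cast hK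
  have hsum := (summable_choose_mul_pow k K (q := x * (K : ℝ) ^ (-β)) (by positivity) hKx).mul_right
    (((K : ℝ) ^ (-β)) ^ k)
  have hlim : Tendsto (fun N : ℕ => ∑' j : ℕ, ((k + j).choose k : ℝ) *
      (risingCoeff (β * (k + j : ℕ) + 1) N / (N : ℝ) ^ (β * (k + j : ℕ))) * (-x) ^ j) atTop
      (𝓝 (∑' j : ℕ, ((k + j).choose k : ℝ) * (Real.Gamma (β * (k + j : ℕ) + 1))⁻¹ * (-x) ^ j)) := by
    refine tendsto_tsum_of_dominated_convergence hsum (fun j => ?_) ?_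
    · exact ((tendsto_risingCoeff (by positivity)).const_mul _).mul_const _
    · filter_upwards [eventually_ge_atTop K] with N hN j
      have hr : 0 ≤ risingCoeff (β * (k + j : ℕ) + 1) N / (N : ℝ) ^ (β * (k + j : ℕ)) :=
        div_nonneg (risingCoeff_nonneg (by positivity) _) (by positivity)
      rw [norm_mul, norm_mul, norm_pow, norm_neg, Real.norm_of_nonneg hx.le,
        Real.norm_of_nonneg (Nat.cast_nonneg _), Real.norm_of_nonneg hr]
      calc _ ≤ ((k + j).choose k : ℝ) *
            ((1 + ((k + j : ℕ) : ℝ)) ^ K * ((K : ℝ) ^ (-β)) ^ (k + j)) * x ^ j := by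
            gcongr
            exact risingCoeff_div_le h0 h1 hK hN (k + j)
        _ = _ := by rw [pow_add, mul_pow]; ring
  refine ge_of_tendsto hlim ?_
  have hμ := ((tendsto_rpow_neg_atTop h0).comp tendsto_natCast_atTop_atTop).const_mul x
  rw [mul_zero] at hμ
  filter_upwards [hμ.eventually_lt_const one_pos, eventually_gt_atTop 0] with N hN hNpos
  have hNpos' : (0 : ℝ) < N := by exact_mod_cast hNpos
  have hres := resolventCoeff_nonneg h0 h1 (μ := x * (N : ℝ) ^ (-β)) (by positivity) hN k N
  have : ∑' j : ℕ, ((k + j).choose k : ℝ) *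
      (risingCoeff (β * (k + j : ℕ) + 1) N / (N : ℝ) ^ (β * (k + j : ℕ))) * (-x) ^ j
      = ((N : ℝ) ^ (-β)) ^ k * resolventCoeff β (x * (N : ℝ) ^ (-β)) k N := by
    rw [resolventCoeff, ← tsum_mul_left]
    refine tsum_congr fun j => ?_
    have e : ((N : ℝ) ^ (β * (k + j : ℕ)))⁻¹ = ((N : ℝ) ^ (-β)) ^ k * ((N : ℝ) ^ (-β)) ^ j := by
      rw [← pow_add, ← Real.rpow_mul_natCast hNpos'.le, neg_mul, Real.rpow_neg hNpos'.le]
    rw [div_eq_mul_inv, e, ← neg_mul, mul_pow]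
    ring
  rw [this]
  positivity

/-! ### Derivatives of everywhere convergent power series -/

lemma summable_deriv_coeff {c : ℕ → ℝ} (hc : ∀ R : ℝ, 0 < R → Summable fun m => |c m| * R ^ m)
    {R : ℝ} (hR : 0 < R) : Summable fun m : ℕ => |((m : ℝ) + 1) * c (m + 1)| * R ^ m := by
  have h := ((summable_nat_add_iff 1).2 (hc (2 * R) (by positivity))).mul_right R⁻¹
  refine Summable.of_nonneg_of_le (fun m => by positivity) (fun m => ?_) h
  have h2 : ((m : ℝ) + 1) ≤ 2 ^ (m + 1) := by
    exact_mod_cast (Nat.lt_two_pow_self (n := m + 1)).le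
  rw [abs_mul, abs_of_nonneg (by positivity : (0 : ℝ) ≤ (m : ℝ) + 1)]
  calc ((m : ℝ) + 1) * |c (m + 1)| * R ^ m ≤ 2 ^ (m + 1) * |c (m + 1)| * R ^ m := by gcongr
    _ = _ := by rw [mul_pow, pow_succ R]; field_simp

lemma deriv_tsum_pow {c : ℕ → ℝ} (hc : ∀ R : ℝ, 0 < R → Summable fun m => |c m| * R ^ m) :
    deriv (fun x : ℝ => ∑' m, c m * x ^ m)
      = fun x => ∑' m : ℕ, (((m : ℝ) + 1) * c (m + 1)) * x ^ m := by
  funext x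
  have hR : (0 : ℝ) < |x| + 1 := by positivity
  have hu : Summable fun m : ℕ => |c m| * (m * (|x| + 1) ^ (m - 1)) := by
    refine (summable_nat_add_iff 1).1 ((summable_deriv_coeff hc hR).congr fun m => ?_)
    rw [abs_mul, abs_of_nonneg (by positivity : (0 : ℝ) ≤ (m : ℝ) + 1)]
    push_cast
    ring
  have hb : ∀ (m : ℕ) (y : ℝ), y ∈ Metric.ball (0 : ℝ) (|x| + 1) →
      ‖c m * (m * y ^ (m - 1))‖ ≤ |c m| * (m * (|x| + 1) ^ (m - 1)) := by
    intro m y hy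
    have hy' : |y| ≤ |x| + 1 := by simpa using (mem_ball_zero_iff.1 hy).le
    rw [Real.norm_eq_abs, abs_mul, abs_mul, abs_pow, Nat.abs_cast]
    gcongr
  have hx : x ∈ Metric.ball (0 : ℝ) (|x| + 1) := by simp
  have h := hasDerivAt_tsum_of_isPreconnected (g := fun m x => c m * x ^ m)
    (g' := fun m y => c m * (m * y ^ (m - 1))) (y₀ := x) hu
    Metric.isOpen_ball (convex_ball (0 : ℝ) (|x| + 1)).isPreconnected
    (fun m y _ => (hasDerivAt_pow m y).const_mul (c m)) hb hx
    (Summable.of_norm_bounded (hc (|x| + 1) hR) fun m => by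
      rw [Real.norm_eq_abs, abs_mul, abs_pow]
      gcongr
      linarith) hx
  rw [h.deriv, (Summable.of_norm_bounded hu fun m => hb m x hx).tsum_eq_zero_add]
  simp only [Nat.cast_zero, zero_mul, mul_zero, zero_add]
  refine tsum_congr fun m => ?_
  push_cast
  ring

lemma iteratedDeriv_tsum_pow (k : ℕ) {c : ℕ → ℝ}
    (hc : ∀ R : ℝ, 0 < R → Summable fun m => |c m| * R ^ m) (x : ℝ) :
    iteratedDeriv k (fun x : ℝ => ∑' m, c m * x ^ m) x
      = k.factorial * ∑' j : ℕ, ((k + j).choose k : ℝ) * c (k + j) * x ^ j := by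
  induction k generalizing c with
  | zero => simp
  | succ k ih =>
    rw [iteratedDeriv_succ', deriv_tsum_pow hc, ih fun R hR => summable_deriv_coeff hc hR,
      Nat.factorial_succ, mul_comm (k + 1), Nat.cast_mul, mul_assoc,
      ← tsum_mul_left (a := ((k + 1 : ℕ) : ℝ))]
    congr 1
    refine tsum_congr fun j => ?_
    have h : ((k + j + 1 : ℕ) : ℝ) * ((k + j).choose k : ℝ)
        = ((k + j + 1).choose (k + 1) : ℝ) * ((k + 1 : ℕ) : ℝ) := by
      exact_mod_cast Nat.add_one_mul_choose_eq (k + j) k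
    rw [show k + 1 + j = k + j + 1 by ring]
    rw [Nat.cast_succ (k + j)] at h
    linear_combination c (k + j + 1) * x ^ j * h

/-! ### Factorial moments -/

lemma sum_antidiagonal_choose_alternating (m n : ℕ) :
    ∑ p ∈ antidiagonal n, (p.1.choose m : ℝ) * (n.choose p.1 : ℝ) * (-1) ^ p.2
      = if n = m then 1 else 0 := by
  have h := fwdDiff_iter_choose_zero m n
  rw [fwdDiff_iter_eq_sum_shift] at h
  have h' := congrArg (Int.cast : ℤ → ℝ) h
  rw [Finset.Nat.sum_antidiagonal_eq_sum_range_succ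
    (fun i j => (i.choose m : ℝ) * (n.choose i : ℝ) * (-1) ^ j)]
  push_cast at h'
  simp only [smul_eq_mul, zero_add, mul_one] at h'
  refine Eq.trans (sum_congr rfl fun i _ => ?_) h'
  push_cast
  ring

/-- For an entire function `E = ∑ cₘ xᵐ`, the `m`-th binomial moment of the weights
`lamᵏ E⁽ᵏ⁾(-lam) / k!` is `cₘ lamᵐ`: grouping the double series along `k + j = n`, the alternating
sum of `C(k, m) C(n, k)` vanishes unless `n = m`. -/
lemma hasSum_choose_mul {c : ℕ → ℝ} (hc : ∀ R : ℝ, 0 < R → Summable fun m => |c m| * R ^ m)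
    {lam : ℝ} (hlam : 0 < lam) (m : ℕ) :
    HasSum (fun k : ℕ => (k.choose m : ℝ) *
      (lam ^ k * ∑' j : ℕ, ((k + j).choose k : ℝ) * c (k + j) * (-lam) ^ j)) (c m * lam ^ m) := by
  set F : ℕ × ℕ → ℝ := fun p =>
    (p.1.choose m : ℝ) * (lam ^ p.1 * (((p.1 + p.2).choose p.1 : ℝ) * c (p.1 + p.2) * (-lam) ^ p.2))
    with hF
  have hFanti : ∀ n : ℕ, ∀ p ∈ antidiagonal n,
      F p = c n * lam ^ n * ((p.1.choose m : ℝ) * (n.choose p.1 : ℝ) * (-1) ^ p.2) := by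
    intro n p hp
    rw [← mem_antidiagonal.1 hp]
    simp only [hF]
    rw [neg_pow lam, pow_add]
    ring
  have hnorm : ∀ n : ℕ, ∑ p ∈ antidiagonal n, ‖F p‖ ≤ |c n| * (4 * lam) ^ n := by
    intro n
    calc ∑ p ∈ antidiagonal n, ‖F p‖
        ≤ ∑ p ∈ antidiagonal n, |c n| * lam ^ n * 2 ^ n * (n.choose p.1 : ℝ) := by
          refine sum_le_sum fun p hp => ?_
          have hle : p.1 ≤ n := by have := mem_antidiagonal.1 hp; omega
          have h2 : (p.1.choose m : ℝ) ≤ 2 ^ n := by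
            exact_mod_cast (Nat.choose_le_two_pow p.1 m).trans
              (Nat.pow_le_pow_right (by norm_num) hle)
          rw [hFanti n p hp]
          simp only [norm_mul, norm_pow, norm_neg, norm_one, one_pow, mul_one, Real.norm_eq_abs,
            Nat.abs_cast, abs_of_pos hlam]
          rw [← mul_assoc]
          gcongr
      _ = _ := by
          rw [← mul_sum, Finset.Nat.sum_antidiagonal_eq_sum_range_succ
            (fun i _ => (n.choose i : ℝ))]
          have : ∑ i ∈ range n.succ, (n.choose i : ℝ) = 2 ^ n := by
            exact_mod_cast Nat.sum_range_choose n
          rw [this, mul_pow, show (4 : ℝ) = 2 * 2 by norm_num, mul_pow]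
          ring
  have hsumF : Summable F := by
    rw [← HasAntidiagonal.sigmaAntidiagonalEquivProd.summable_iff, ← summable_norm_iff,
      summable_sigma_of_nonneg fun _ => norm_nonneg _]
    refine ⟨fun n => (hasSum_fintype _).summable, ?_⟩
    refine Summable.of_nonneg_of_le (fun n => tsum_nonneg fun _ => norm_nonneg _) (fun n => ?_)
      (hc (4 * lam) (by positivity))
    refine le_trans (le_of_eq ?_) (hnorm n)
    rw [tsum_fintype]
    exact sum_coe_sort (antidiagonal n) fun p => ‖F p‖
  have htot : ∑' p, F p = c m * lam ^ m := by
    rw [← HasAntidiagonal.sigmaAntidiagonalEquivProd.tsum_eq]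
    refine (HasAntidiagonal.sigmaAntidiagonalEquivProd.summable_iff.2 hsumF).tsum_sigma.trans ?_
    rw [tsum_eq_single m]
    · rw [tsum_fintype]
      refine (sum_coe_sort (antidiagonal m) F).trans ?_
      rw [sum_congr rfl (hFanti m), ← mul_sum, sum_antidiagonal_choose_alternating]
      simp
    · intro n hn
      rw [tsum_fintype]
      refine (sum_coe_sort (antidiagonal n) F).trans ?_
      rw [sum_congr rfl (hFanti n), ← mul_sum, sum_antidiagonal_choose_alternating]
      simp [hn]
  have h := hsumF.hasSum.prod_fiberwise fun k => (hsumF.prod_factor k).hasSum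
  rw [htot] at h
  refine h.congr_fun fun k => ?_
  simp only [hF, tsum_mul_left]

/-! ### Stirling numbers -/

lemma iteratedDeriv_exp_sub_one_pow_succ (n m : ℕ) :
    iteratedDeriv (n + 1) (fun x : ℝ => (Real.exp x - 1) ^ m) 0
      = m * (iteratedDeriv n (fun x : ℝ => (Real.exp x - 1) ^ m) 0
        + iteratedDeriv n (fun x : ℝ => (Real.exp x - 1) ^ (m - 1)) 0) := by
  have hd : deriv (fun x : ℝ => (Real.exp x - 1) ^ m)
      = fun x => (m : ℝ) * ((Real.exp x - 1) ^ m + (Real.exp x - 1) ^ (m - 1)) := by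
    funext x
    rw [(((Real.hasDerivAt_exp x).sub_const 1).fun_pow m).deriv]
    cases m with
    | zero => simp
    | succ m => rw [Nat.add_sub_cancel, pow_succ]; ring
  rw [iteratedDeriv_succ', hd, iteratedDeriv_const_mul_field, iteratedDeriv_fun_add]
  all_goals fun_prop

lemma iteratedDeriv_exp_sub_one_pow_eq_zero {n m : ℕ} (h : n < m) :
    iteratedDeriv n (fun x : ℝ => (Real.exp x - 1) ^ m) 0 = 0 := by
  induction n generalizing m with
  | zero => simpa using h.ne'
  | succ n ih =>
    rw [iteratedDeriv_exp_sub_one_pow_succ, ih (by omega), ih (by omega)]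
    simp

/-- Differentiating `e^(k x) = ∑ₘ C(k, m) (eˣ - 1)ᵐ` at `0` expands `kⁿ` in binomials. -/
lemma pow_eq_sum_stirlingSnd (k n : ℕ) :
    (k : ℝ) ^ n = ∑ m ∈ range (n + 1), (m.factorial : ℝ) * stirlingSnd n m * (k.choose m : ℝ) := by
  have hterm : ∀ m, (m.factorial : ℝ) * stirlingSnd n m * (k.choose m : ℝ)
      = (k.choose m : ℝ) * iteratedDeriv n (fun x : ℝ => (Real.exp x - 1) ^ m) 0 := by
    intro m
    have : (m.factorial : ℝ) ≠ 0 := by positivity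
    rw [stirlingSnd]
    field_simp
  have hexp : (fun x : ℝ => Real.exp (k * x))
      = fun x => ∑ m ∈ range (k + 1), (k.choose m : ℝ) * (Real.exp x - 1) ^ m := by
    funext x
    rw [Real.exp_nat_mul]
    conv_lhs => rw [← sub_add_cancel (Real.exp x) 1, add_pow]
    exact sum_congr rfl fun m _ => by rw [one_pow]; ring
  have h := congrFun (iteratedDeriv_exp_const_mul n k) 0
  rw [hexp, iteratedDeriv_fun_sum fun i _ => by fun_prop] at h
  simp only [iteratedDeriv_const_mul_field, mul_zero, Real.exp_zero, mul_one] at h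
  rw [← h]
  simp_rw [hterm]
  -- both sums agree with the one over `m ≤ max n k`
  trans ∑ m ∈ range (max n k + 1),
      (k.choose m : ℝ) * iteratedDeriv n (fun x : ℝ => (Real.exp x - 1) ^ m) 0
  · refine sum_subset (range_mono (by omega)) fun m _ hm => ?_
    rw [Nat.choose_eq_zero_of_lt (by simpa using hm)]
    simp
  · refine (sum_subset (range_mono (by omega)) fun m _ hm => ?_).symm
    rw [iteratedDeriv_exp_sub_one_pow_eq_zero (by simpa using hm), mul_zero]

theorem stmt2 (lam β : ℝ) (hlam : 0 < lam) (hβ0 : 0 < β) (hβ1 : β ≤ 1) (n : ℕ) :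
    Integrable (fun x : ℝ => x ^ n) (fracPoisson lam β) ∧
    (∫ x, x ^ n ∂(fracPoisson lam β)) = ∑ m ∈ Finset.range (n + 1),
      (m.factorial : ℝ) / Real.Gamma (m * β + 1) * stirlingSnd n m * lam ^ m := by
  have hc : ∀ R : ℝ, 0 < R → Summable fun m : ℕ => |(Real.Gamma (β * m + 1))⁻¹| * R ^ m :=
    fun R hR => summable_Gamma_inv hβ0 hβ1 hR
  have hE : mittagLefflerR β = fun x => ∑' m : ℕ, (Real.Gamma (β * m + 1))⁻¹ * x ^ m := by
    funext x
    exact tsum_congr fun m => by rw [div_eq_inv_mul]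
  have hp : ∀ k : ℕ, lam ^ k / k.factorial * iteratedDeriv k (mittagLefflerR β) (-lam)
      = lam ^ k * ∑' j : ℕ, ((k + j).choose k : ℝ) * (Real.Gamma (β * (k + j : ℕ) + 1))⁻¹
          * (-lam) ^ j := by
    intro k
    have : (k.factorial : ℝ) ≠ 0 := by positivity
    rw [hE, iteratedDeriv_tsum_pow k hc]
    field_simp
  have hp0 : ∀ k : ℕ, 0 ≤ lam ^ k / k.factorial * iteratedDeriv k (mittagLefflerR β) (-lam) := by
    intro k
    rw [hp k]
    exact mul_nonneg (by positivity) (tsum_choose_Gamma_inv_nonneg hβ0 hβ1 hlam k)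
  have hmom : HasSum (fun k : ℕ =>
      lam ^ k / k.factorial * iteratedDeriv k (mittagLefflerR β) (-lam) * (k : ℝ) ^ n)
      (∑ m ∈ Finset.range (n + 1),
        (m.factorial : ℝ) / Real.Gamma (m * β + 1) * stirlingSnd n m * lam ^ m) := by
    have h := hasSum_sum (s := range (n + 1)) fun m _ =>
      (hasSum_choose_mul hc hlam m).mul_left ((m.factorial : ℝ) * stirlingSnd n m)
    have hval : ∑ m ∈ range (n + 1), (m.factorial : ℝ) * stirlingSnd n m *
          ((Real.Gamma (β * m + 1))⁻¹ * lam ^ m)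
        = ∑ m ∈ Finset.range (n + 1),
          (m.factorial : ℝ) / Real.Gamma (m * β + 1) * stirlingSnd n m * lam ^ m :=
      sum_congr rfl fun m _ => by rw [mul_comm β, div_eq_mul_inv]; ring
    rw [hval] at h
    refine h.congr_fun fun k => ?_
    rw [hp k, pow_eq_sum_stirlingSnd k n, mul_sum]
    exact sum_congr rfl fun m _ => by ring
  have hs : Summable fun k : ℕ =>
      (ENNReal.ofReal (lam ^ k / k.factorial * iteratedDeriv k (mittagLefflerR β) (-lam))).toReal
        * ‖(k : ℝ) ^ n‖ := by
    refine hmom.summable.congr fun k => ?_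
    rw [ENNReal.toReal_ofReal (hp0 k), Real.norm_of_nonneg (by positivity)]
  refine ⟨integrable_sum_dirac (fun _ => ENNReal.ofReal_ne_top) hs, ?_⟩
  refine (hasSum_integral_sum_dirac (f := fun x : ℝ => x ^ n)
    (fun _ => ENNReal.ofReal_ne_top) hs).unique (hmom.congr_fun fun k => ?_)
  rw [ENNReal.toReal_ofReal (hp0 k), smul_eq_mul]
end
end

section
/- Let λ > 0 and β ∈ (0,1]. For every n ∈ ℕ₀ and every x ∈ ℝ, C_n^{λ,β}(x) = ∑_{m=0}^n s(n,m) A_m^{λ,β}(x), where s(n,m) are the Stirling numbers of the first kind. -/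
/-!
Near `0` the generating function of the generalized Appell polynomials is `g ∘ L`, where
`g w = exp (w x) / E_β (λ (exp w - 1))` generates the Appell polynomials and `L z = log (1 + z)`.
Taylor's formula writes `g w = ∑_{m ≤ n} A_m(x) wᵐ / m! + w ^ (n + 1) * R w` with `R` analytic.
Substituting `w = L z`, the remainder vanishes to order `n + 1` at `0` because `L 0 = 0`, so
`C_n(x)` is the sum of `A_m(x) / m!` times the `n`-th derivative of `L ^ m` at `0`
(`iteratedDeriv_comp_eq_sum`). The Stirling numbers are defined by real derivatives; these agree
with the complex ones by `ofReal_iteratedDeriv`. Analyticity of `g` rests on that of `E_β` at `0`,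
which follows from the positive lower bound of `Γ` on `(0, ∞)`.
-/

open MeasureTheory Finset
open scoped ENNReal NNReal

noncomputable section

open Filter Topology

/-- The lower bound of `Γ` on `(0, ∞)` gives a geometric majorant of the series on `|z| < 1/2`. -/
lemma analyticAt_mittagLeffler {β : ℝ} (hβ : 0 < β) : AnalyticAt ℂ (mittagLeffler β) 0 := by
  obtain ⟨x₀, hx₀, hmin⟩ := Real.exists_isMinOn_Gamma_Ioi
  have hc : 0 < Real.Gamma x₀ := Real.Gamma_pos_of_pos (by linarith [hx₀.1])
  have hd : DifferentiableOn ℂ (mittagLeffler β) (Metric.ball 0 (1 / 2)) := by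
    refine Complex.differentiableOn_tsum_of_summable_norm
      (u := fun n : ℕ => (1 / 2 : ℝ) ^ n / Real.Gamma x₀)
      ((summable_geometric_of_lt_one (by norm_num) (by norm_num)).div_const _)
      (fun n => by fun_prop) Metric.isOpen_ball fun n w hw => ?_
    have hpos : (0 : ℝ) < β * n + 1 := by positivity
    have hle : Real.Gamma x₀ ≤ Real.Gamma (β * n + 1) := hmin hpos
    have hw' : ‖w‖ ≤ 1 / 2 := (mem_ball_zero_iff.mp hw).le
    rw [Complex.Gamma_ofReal, norm_div, norm_pow, Complex.norm_real, Real.norm_eq_abs,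
      abs_of_pos (hc.trans_le hle)]
    gcongr
  exact hd.analyticAt (Metric.ball_mem_nhds _ (by norm_num))

lemma mittagLeffler_zero (β : ℝ) : mittagLeffler β 0 = 1 := by
  unfold mittagLeffler
  rw [tsum_eq_single 0 fun n hn => by simp [hn]]
  simp

/-- A truncated Faà di Bruno formula, valid for an inner function that vanishes at `0`. -/
lemma iteratedDeriv_comp_eq_sum {g L : ℂ → ℂ} (hg : AnalyticAt ℂ g 0) (hL : AnalyticAt ℂ L 0)
    (hL0 : L 0 = 0) (n : ℕ) :
    iteratedDeriv n (fun z => g (L z)) 0 = ∑ m ∈ Finset.range (n + 1),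
      iteratedDeriv n (fun z => L z ^ m) 0 / m.factorial * iteratedDeriv m g 0 := by
  obtain ⟨R, hR, hgR⟩ := hg.exists_eq_sum_add_pow_mul (n + 1)
  obtain ⟨k, hk, hLk⟩ := hL.exists_eq_sum_add_pow_mul 1
  have hRL : AnalyticAt ℂ (fun z => R (L z)) 0 := AnalyticAt.fun_comp (by rwa [hL0]) hL
  have hrem : AnalyticAt ℂ (fun z => L z ^ (n + 1) * R (L z)) 0 := (hL.pow _).mul hRL
  have hvanish : iteratedDeriv n (fun z => L z ^ (n + 1) * R (L z)) 0 = 0 := by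
    refine (natCast_le_analyticOrderAt_iff_iteratedDeriv_eq_zero hrem).mp
      ((natCast_le_analyticOrderAt hrem).mpr
        ⟨fun z => k z ^ (n + 1) * R (L z), (hk.pow _).mul hRL, .of_forall fun z => ?_⟩)
      n n.lt_succ_self
    have hz : L z = z * k z := by simpa [hL0] using hLk z
    rw [sub_zero, smul_eq_mul, ← mul_assoc, ← mul_pow, ← hz]
  have hexp : (fun z => g (L z)) = fun z =>
      (∑ m ∈ Finset.range (n + 1), iteratedDeriv m g 0 / m.factorial * L z ^ m) +
        L z ^ (n + 1) * R (L z) := by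
    funext z
    rw [hgR (L z), smul_eq_mul]
    congr 1
    exact Finset.sum_congr rfl fun m _ => by rw [smul_eq_mul]; ring
  have hterm : ∀ m ∈ Finset.range (n + 1),
      AnalyticAt ℂ (fun z => iteratedDeriv m g 0 / m.factorial * L z ^ m) 0 :=
    fun m _ => analyticAt_const.mul (hL.pow m)
  rw [hexp, iteratedDeriv_fun_add (Finset.analyticAt_fun_sum _ hterm).contDiffAt hrem.contDiffAt,
    hvanish, add_zero, iteratedDeriv_fun_sum fun m hm => (hterm m hm).contDiffAt]
  refine Finset.sum_congr rfl fun m _ => ?_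
  rw [iteratedDeriv_const_mul_field]
  ring

/-- Real iterated derivatives of a real function agree with the complex ones of an analytic
extension. -/
lemma ofReal_iteratedDeriv (n : ℕ) {r : ℝ → ℝ} {F : ℂ → ℂ} {a : ℝ} (hF : AnalyticAt ℂ F a)
    (h : ∀ᶠ t : ℝ in 𝓝 a, (r t : ℂ) = F t) :
    ((iteratedDeriv n r a : ℝ) : ℂ) = iteratedDeriv n F a := by
  induction n generalizing r F with
  | zero => simpa using h.self_of_nhds
  | succ n ih =>
    rw [iteratedDeriv_succ', iteratedDeriv_succ']
    refine ih hF.deriv ?_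
    have han : ∀ᶠ t : ℝ in 𝓝 a, AnalyticAt ℂ F t :=
      Complex.continuous_ofReal.continuousAt.eventually hF.eventually_analyticAt
    filter_upwards [h.eventually_nhds, han] with t ht hFt
    have hFd := hFt.differentiableAt.hasDerivAt
    have hr : HasDerivAt r (deriv F t).re t :=
      hFd.real_of_complex.congr_of_eventuallyEq
        (ht.mono fun s hs => by simp only [← hs, Complex.ofReal_re])
    rw [hr.deriv]
    exact hr.ofReal_comp.unique (hFd.comp_ofReal.congr_of_eventuallyEq ht)

lemma analyticAt_log_one_add : AnalyticAt ℂ (fun z : ℂ => Complex.log (1 + z)) 0 :=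
  (analyticAt_const.add analyticAt_id).clog (by simp)

lemma ofReal_stirlingFst (n m : ℕ) :
    (stirlingFst n m : ℂ) =
      iteratedDeriv n (fun z : ℂ => Complex.log (1 + z) ^ m) 0 / m.factorial := by
  unfold stirlingFst
  rw [Complex.ofReal_div, Complex.ofReal_natCast,
    ofReal_iteratedDeriv n (F := fun z : ℂ => Complex.log (1 + z) ^ m), Complex.ofReal_zero]
  · rw [Complex.ofReal_zero]
    exact analyticAt_log_one_add.pow m
  · filter_upwards [lt_mem_nhds (show (-1 : ℝ) < 0 by norm_num)] with t ht
    rw [Complex.ofReal_pow, Complex.ofReal_log (by linarith)]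
    simp

theorem stmt4 (lam β : ℝ) (hlam : 0 < lam) (hβ0 : 0 < β) (hβ1 : β ≤ 1) (n : ℕ) (x : ℝ) :
    genAppell lam β n x =
      ∑ m ∈ Finset.range (n + 1), (stirlingFst n m : ℂ) * appell lam β m x := by
  have hden : AnalyticAt ℂ (fun w : ℂ => mittagLeffler β (lam * (Complex.exp w - 1))) 0 :=
    AnalyticAt.fun_comp (g := mittagLeffler β) (by simpa using analyticAt_mittagLeffler hβ0)
      (by fun_prop)
  have hg : AnalyticAt ℂ
      (fun w : ℂ => Complex.exp (w * x) / mittagLeffler β (lam * (Complex.exp w - 1))) 0 :=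
    AnalyticAt.div (by fun_prop) hden (by simp [mittagLeffler_zero])
  -- `exp (log (1 + z)) - 1 = z` holds only where `1 + z ≠ 0`, hence the local equality.
  have hne : ∀ᶠ z : ℂ in 𝓝 0, 1 + z ≠ 0 :=
    ContinuousAt.eventually_ne (by fun_prop) (by simp)
  have hcomp : (fun z : ℂ => Complex.exp (x * Complex.log (1 + z)) / mittagLeffler β (lam * z))
      =ᶠ[𝓝 0] fun z : ℂ => (fun w : ℂ =>
        Complex.exp (w * x) / mittagLeffler β (lam * (Complex.exp w - 1)))
          (Complex.log (1 + z)) := by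
    filter_upwards [hne] with z hz
    simp only [Complex.exp_log hz, add_sub_cancel_left, mul_comm (x : ℂ)]
  unfold genAppell
  rw [hcomp.iteratedDeriv_eq n, iteratedDeriv_comp_eq_sum hg analyticAt_log_one_add (by simp) n]
  exact Finset.sum_congr rfl fun m _ => by rw [ofReal_stirlingFst, appell]
end
end

section
/- Let λ > 0 and β ∈ (0,1]. For every n ∈ ℕ₀ and every x ∈ ℝ, x^n = ∑_{k=0}^n ∑_{m=0}^k binom(n,k) C_m^{λ,β}(x) S(k,m) M_{λ,β}(n−k), where S(k,m) are the Stirling numbers of the second kind and M_{λ,β}(j) is the j-th moment of the fractional Poisson measure. -/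
/-!
The identity compares `n`-th derivatives at `z = 0` in `e^{xz} = F(eᶻ - 1) · H(z)`, where
`F(w) = e^{x log(1+w)} / E_β(λw)` and `H(z) = E_β(λ(eᶻ - 1))`. The Leibniz rule gives the outer
sum. The derivatives of `F(eᶻ - 1)` are `∑ F^{(m)}(0) S(k,m)`
(`iteratedDeriv_comp_exp_sub_one`), and those of `H` are the moments, since `H` is the moment
generating function of the fractional Poisson measure (`complexMGF_fracPoisson`): expand `E_β`
in its Taylor series around `-λ`.

The last step needs the weights `λᵏ/k! · E_β^{(k)}(-λ)` to be nonnegative, because the measure is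
defined with `ENNReal.ofReal`. This is the complete monotonicity of `x ↦ E_β(-x)`
(`mittagLeffler_iteratedDeriv_nonneg`), proved as follows. By Euler's limit formula,
`n!/Γ(βn+1)` is the limit as `N → ∞` of `N^{(1-β)n} ∏_{i=1}^{N+1} (βn+i)/(n+i)`. Each factor
`(βn+i)/(n+i) = β + (1-β) i/(n+i)` is the `n`-th moment of a variable with values in `[0,1]`, so
the whole expression is the `n`-th moment of a bounded nonnegative variable
(`exists_beta_product`), whose moment generating function has nonnegative derivatives on `ℝ`.
Divided by `n!`, these moments are at most `∏_{l<n} 2/(βl+1)^β`, uniformly in `N`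
(`approxCoeff_le`); hence the generating functions converge locally uniformly on `ℂ` to `E_β`,
and so do all their derivatives. The same bound shows that `E_β` is entire.
-/

open MeasureTheory Finset
open scoped ENNReal NNReal

noncomputable section

open Filter Topology ProbabilityTheory

/-! ### Approximation of the Mittag-Leffler coefficients by moment sequences -/

/-- The law of `U ^ (1 / i)`, with `U` uniform on `(0, 1]`, has moments `i / (n + i)`. -/
lemma exists_unit_moment (i : ℕ) (hi : 0 < i) :
    ∃ ρ : Measure ℝ, IsProbabilityMeasure ρ ∧ (∀ᵐ t ∂ρ, t ∈ Set.Icc (0 : ℝ) 1) ∧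
      ∀ n : ℕ, ∫ t, t ^ n ∂ρ = (i : ℝ) / (n + i) := by
  have hi' : (0 : ℝ) < i := by exact_mod_cast hi
  have hm : Measurable (fun u : ℝ => u ^ ((i : ℝ)⁻¹)) := by fun_prop
  have hP : IsProbabilityMeasure (volume.restrict (Set.Ioc (0 : ℝ) 1)) := ⟨by simp⟩
  refine ⟨(volume.restrict (Set.Ioc (0 : ℝ) 1)).map (fun u => u ^ ((i : ℝ)⁻¹)),
    Measure.isProbabilityMeasure_map hm.aemeasurable, ?_, fun n => ?_⟩
  · refine (ae_map_iff hm.aemeasurable measurableSet_Icc).2 ?_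
    refine (ae_restrict_iff' measurableSet_Ioc).2 (.of_forall fun u hu => ?_)
    exact ⟨Real.rpow_nonneg hu.1.le _, Real.rpow_le_one hu.1.le hu.2 (by positivity)⟩
  · rw [integral_map hm.aemeasurable (by fun_prop),
      setIntegral_congr_fun (g := fun u : ℝ => u ^ ((n : ℝ) / i)) measurableSet_Ioc,
      ← intervalIntegral.integral_of_le zero_le_one, integral_rpow]
    · have : (n : ℝ) / i + 1 ≠ 0 := by positivity
      rw [Real.one_rpow, Real.zero_rpow this]
      field_simp
      simp
    · left
      have : (0 : ℝ) ≤ n / i := by positivity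
      linarith
    · intro u hu
      simp only
      rw [← Real.rpow_natCast, ← Real.rpow_mul hu.1.le]
      congr 1
      field_simp

/-- Each factor equals `β + (1 - β) i / (n + i)` with `i = j + 1`, hence is the `n`-th moment of a
mixture of `δ_1` and the law of `U ^ (1 / i)`; products of moments are moments of products of
independent variables. -/
lemma exists_beta_product (β : ℝ) (hβ0 : 0 < β) (hβ1 : β ≤ 1) (M : ℕ) :
    ∃ μ : Measure ℝ, IsProbabilityMeasure μ ∧ (∀ᵐ t ∂μ, t ∈ Set.Icc (0 : ℝ) 1) ∧
      ∀ n : ℕ, ∫ t, t ^ n ∂μ =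
        ∏ j ∈ Finset.range M, (β * n + 1 + j) / ((n : ℝ) + 1 + j) := by
  induction M with
  | zero =>
    exact ⟨Measure.dirac 1, inferInstance, (ae_dirac_iff measurableSet_Icc).2 (by simp), fun n => by simp⟩
  | succ M ih =>
    obtain ⟨μ, hμ, hμs, hμm⟩ := ih
    obtain ⟨ρ, hρ, hρs, hρm⟩ := exists_unit_moment (M + 1) M.succ_pos
    set ν : Measure ℝ := ENNReal.ofReal β • Measure.dirac 1 + ENNReal.ofReal (1 - β) • ρ with hν
    have hνP : IsProbabilityMeasure ν := ⟨by
      simp only [hν, Measure.add_apply, Measure.smul_apply, measure_univ, smul_eq_mul, mul_one]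
      rw [← ENNReal.ofReal_add hβ0.le (by linarith)]
      simp⟩
    have hνs : ∀ᵐ t ∂ν, t ∈ Set.Icc (0 : ℝ) 1 := by
      rw [hν, ae_add_measure_iff]
      refine ⟨Measure.ae_smul_measure ?_ _, Measure.ae_smul_measure hρs _⟩
      exact (ae_dirac_iff measurableSet_Icc).2 (by simp)
    have hint : ∀ n : ℕ, Integrable (fun t : ℝ => t ^ n) ρ := fun n => by
      refine Integrable.of_mem_Icc 0 1 (by fun_prop) ?_
      filter_upwards [hρs] with t ht
      exact ⟨pow_nonneg ht.1 n, pow_le_one₀ ht.1 ht.2⟩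
    have hνm : ∀ n : ℕ, ∫ t, t ^ n ∂ν = (β * n + 1 + M) / ((n : ℝ) + 1 + M) := fun n => by
      rw [hν, integral_add_measure ((integrable_dirac (by simp)).smul_measure (by simp))
        ((hint n).smul_measure (by simp)), integral_smul_measure, integral_smul_measure,
        hρm, integral_dirac, ENNReal.toReal_ofReal hβ0.le, ENNReal.toReal_ofReal (by linarith)]
      have : (n : ℝ) + 1 + M ≠ 0 := by positivity
      have : (n : ℝ) + (M + 1) ≠ 0 := by positivity
      push_cast
      simp only [smul_eq_mul, one_pow]
      field_simp
      ring
    have hm : Measurable (fun p : ℝ × ℝ => p.1 * p.2) := by fun_prop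
    refine ⟨(μ.prod ν).map (fun p => p.1 * p.2),
      Measure.isProbabilityMeasure_map hm.aemeasurable, ?_, fun n => ?_⟩
    · refine (ae_map_iff hm.aemeasurable measurableSet_Icc).2 ?_
      filter_upwards [Measure.quasiMeasurePreserving_fst.ae hμs,
        Measure.quasiMeasurePreserving_snd.ae hνs] with p h1 h2
      exact ⟨mul_nonneg h1.1 h2.1, mul_le_one₀ h1.2 h2.1 h2.2⟩
    · rw [integral_map hm.aemeasurable (by fun_prop)]
      simp only [mul_pow]
      rw [integral_prod_mul (fun t : ℝ => t ^ n) (fun t : ℝ => t ^ n), hμm, hνm,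
        Finset.prod_range_succ]

/-- The `n`-th Taylor coefficient (moment over `n!`) of the moment generating function of
`N ^ (1 - β) * T`, where `T` has the moments of `exists_beta_product` with `N + 1` factors. By
Euler's limit formula for `Γ` it tends to `1 / Γ(βn + 1)` as `N → ∞`. -/
def approxCoeff (β : ℝ) (N n : ℕ) : ℝ :=
  ((N : ℝ) ^ (1 - β)) ^ n *
    (∏ j ∈ Finset.range (N + 1), (β * n + 1 + j) / ((n : ℝ) + 1 + j)) / n.factorial

/-- A bound for `approxCoeff β N n` that does not depend on `N` and decays faster than any
geometric sequence. -/
def majorant (β : ℝ) (n : ℕ) : ℝ := ∏ l ∈ Finset.range n, 2 / (β * l + 1) ^ β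

/-- `approxCoeff β N` are the Taylor coefficients of an entire function all of whose derivatives are
nonnegative on `ℝ`, being the moment generating function of a nonnegative bounded variable. -/
lemma exists_approx (β : ℝ) (hβ0 : 0 < β) (hβ1 : β ≤ 1) (N : ℕ) :
    ∃ f : ℂ → ℂ, Differentiable ℂ f ∧
      (∀ z, HasSum (fun n : ℕ => (approxCoeff β N n : ℂ) * z ^ n) (f z)) ∧
      ∀ (k : ℕ) (x : ℝ), 0 ≤ (iteratedDeriv k f x).re := by
  obtain ⟨μ, hμ, hμs, hμm⟩ := exists_beta_product β hβ0 hβ1 (N + 1)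
  set c : ℝ := (N : ℝ) ^ (1 - β) with hc
  have hc0 : 0 ≤ c := by positivity
  have huniv : integrableExpSet (fun t : ℝ => c * t) μ = Set.univ := by
    refine Set.eq_univ_of_forall fun t => ?_
    refine integrable_exp_mul_of_mem_Icc (a := 0) (b := c) (by fun_prop) ?_
    filter_upwards [hμs] with t ht
    exact ⟨mul_nonneg hc0 ht.1, mul_le_of_le_one_right hc0 ht.2⟩
  have hmem : ∀ x : ℝ, x ∈ interior (integrableExpSet (fun t : ℝ => c * t) μ) := by
    simp [huniv]
  have hd : Differentiable ℂ (complexMGF (fun t : ℝ => c * t) μ) := fun z =>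
    (hasDerivAt_complexMGF (hmem z.re)).differentiableAt
  refine ⟨complexMGF (fun t : ℝ => c * t) μ, hd, fun z => ?_, fun k x => ?_⟩
  · have h := Complex.hasSum_taylorSeries_of_entire hd 0 z
    suffices H : ∀ n : ℕ, (n.factorial : ℂ)⁻¹ • (z - 0) ^ n •
        iteratedDeriv n (complexMGF (fun t : ℝ => c * t) μ) 0 = (approxCoeff β N n : ℂ) * z ^ n by
      simpa only [H] using h
    intro n
    rw [iteratedDeriv_complexMGF (hmem _)]
    have : (∫ t : ℝ, ((c * t : ℝ) : ℂ) ^ n * Complex.exp (0 * ((c * t : ℝ) : ℂ)) ∂μ)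
        = ((c ^ n * ∏ j ∈ Finset.range (N + 1), (β * n + 1 + j) / ((n : ℝ) + 1 + j) : ℝ) : ℂ) := by
      rw [← hμm, ← integral_const_mul, ← integral_complex_ofReal]
      refine integral_congr_ae (.of_forall fun t => ?_)
      simp [mul_pow]
    rw [this, approxCoeff, ← hc]
    simp only [sub_zero, smul_eq_mul]
    push_cast
    ring
  · rw [iteratedDeriv_complexMGF (hmem _)]
    have : (∫ t : ℝ, ((c * t : ℝ) : ℂ) ^ k * Complex.exp (x * ((c * t : ℝ) : ℂ)) ∂μ)
        = ((∫ t : ℝ, (c * t) ^ k * Real.exp (x * (c * t)) ∂μ : ℝ) : ℂ) := by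
      rw [← integral_complex_ofReal]
      refine integral_congr_ae (.of_forall fun t => ?_)
      simp
    rw [this, Complex.ofReal_re]
    refine integral_nonneg_of_ae ?_
    filter_upwards [hμs] with t ht
    have := ht.1
    positivity

/-- For each `j ≥ 1`, Bernoulli's inequality gives
`(c + β) / c ≤ (c / (c - 1)) ^ β` with `c = a + 1 + j`, and the right-hand sides telescope; the
factor `j = 0` is bounded by `2`. -/
lemma prod_shift_le (a β : ℝ) (ha : 0 ≤ a) (hβ0 : 0 < β) (hβ1 : β ≤ 1) (N : ℕ) :
    ∏ j ∈ Finset.range (N + 1), (a + β + 1 + j) / (a + 1 + j) ≤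
      2 * ((a + N + 1) / (a + 1)) ^ β := by
  induction N with
  | zero =>
    have : a + 1 ≠ 0 := by positivity
    simp only [zero_add, Finset.prod_range_one, Nat.cast_zero, add_zero]
    rw [div_self this, Real.one_rpow, div_le_iff₀ (by positivity)]
    linarith
  | succ N ih =>
    rw [Finset.prod_range_succ]
    have hc : 0 < a + N + 1 := by positivity
    have hb := rpow_one_add_le_one_add_mul_self (s := -1 / (a + N + 2)) (p := β)
      (by rw [le_div_iff₀ (by positivity)]; linarith) hβ0.le hβ1
    have e1 : 1 + -1 / (a + N + 2) = (a + N + 1) / (a + N + 2) := by field_simp; ring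
    have key : (a + β + 1 + (N + 1 : ℕ)) / (a + 1 + (N + 1 : ℕ)) ≤
        ((a + N + 2) / (a + N + 1)) ^ β := by
      rw [e1] at hb
      have hpos : 0 < ((a + N + 1) / (a + N + 2)) ^ β := by positivity
      rw [← inv_div (a + N + 1), Real.inv_rpow (by positivity), le_inv_comm₀ (by positivity) hpos]
      refine hb.trans ?_
      push_cast
      rw [inv_div, le_div_iff₀ (by positivity)]
      field_simp
      nlinarith
    refine (mul_le_mul ih key (by positivity) (by positivity)).trans_eq ?_
    rw [mul_assoc, ← Real.mul_rpow (by positivity) (by positivity)]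
    congr 2
    push_cast
    field_simp
    ring

lemma prod_telescope (n N : ℕ) :
    ∏ j ∈ Finset.range (N + 1), ((n : ℝ) + 1 + j) / (n + 2 + j) = (n + 1) / (n + N + 2) := by
  induction N with
  | zero => simp
  | succ N ih =>
    rw [Finset.prod_range_succ, ih]
    push_cast
    field_simp
    ring

lemma approxCoeff_succ_le (β : ℝ) (hβ0 : 0 < β) (hβ1 : β ≤ 1) (N n : ℕ) :
    approxCoeff β N (n + 1) ≤ approxCoeff β N n * (2 / (β * n + 1) ^ β) := by
  have h1 : ∏ j ∈ Finset.range (N + 1), (β * (n + 1 : ℕ) + 1 + j) / (((n + 1 : ℕ) : ℝ) + 1 + j)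
      = (∏ j ∈ Finset.range (N + 1), (β * n + 1 + j) / ((n : ℝ) + 1 + j)) *
        ((∏ j ∈ Finset.range (N + 1), (β * n + β + 1 + j) / (β * n + 1 + j)) *
          ((n + 1) / (n + N + 2))) := by
    rw [← prod_telescope, ← Finset.prod_mul_distrib, ← Finset.prod_mul_distrib]
    refine Finset.prod_congr rfl fun j _ => ?_
    push_cast
    field_simp
    ring
  have h2 := prod_shift_le (β * n) β (by positivity) hβ0 hβ1 N
  have h3 : (N : ℝ) ^ (1 - β) * (β * n + N + 1) ^ β ≤ n + N + 2 := by
    have hbn : β * n ≤ n := mul_le_of_le_one_left (by positivity) hβ1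
    calc (N : ℝ) ^ (1 - β) * (β * n + N + 1) ^ β
        ≤ (n + N + 2) ^ (1 - β) * (n + N + 2) ^ β := by
          have : (0:ℝ) ≤ n := by positivity
          gcongr <;> linarith
      _ = n + N + 2 := by
          rw [← Real.rpow_add (by positivity)]; simp
  have h4 : (N : ℝ) ^ (1 - β) * ((∏ j ∈ Finset.range (N + 1),
      (β * n + β + 1 + j) / (β * n + 1 + j)) * (1 / (n + N + 2))) ≤ 2 / (β * n + 1) ^ β := by
    calc _ ≤ (N : ℝ) ^ (1 - β) *
          ((2 * ((β * n + N + 1) / (β * n + 1)) ^ β) * (1 / (n + N + 2))) := by gcongr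
      _ = 2 / (β * n + 1) ^ β *
          (((N : ℝ) ^ (1 - β) * (β * n + N + 1) ^ β) / (n + N + 2)) := by
          rw [Real.div_rpow (by positivity) (by positivity)]
          ring
      _ ≤ 2 / (β * n + 1) ^ β * 1 := by
          gcongr
          exact div_le_one_of_le₀ h3 (by positivity)
      _ = _ := mul_one _
  have h5 : approxCoeff β N (n + 1) = approxCoeff β N n * ((N : ℝ) ^ (1 - β) *
      ((∏ j ∈ Finset.range (N + 1),
      (β * n + β + 1 + j) / (β * n + 1 + j)) * (1 / (n + N + 2)))) := by
    unfold approxCoeff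
    rw [h1, Nat.factorial_succ, pow_succ]
    push_cast
    field_simp
  rw [h5]
  refine mul_le_mul_of_nonneg_left h4 ?_
  unfold approxCoeff
  positivity

lemma approxCoeff_nonneg (β : ℝ) (hβ0 : 0 < β) (N n : ℕ) : 0 ≤ approxCoeff β N n := by
  unfold approxCoeff
  positivity

lemma approxCoeff_le (β : ℝ) (hβ0 : 0 < β) (hβ1 : β ≤ 1) (N n : ℕ) :
    approxCoeff β N n ≤ majorant β n := by
  induction n with
  | zero =>
    have : ∀ j : ℕ, (1 + j : ℝ) / (1 + j) = 1 := fun j => div_self (by positivity)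
    simp [approxCoeff, majorant, this]
  | succ n ih =>
    rw [majorant, Finset.prod_range_succ]
    exact (approxCoeff_succ_le β hβ0 hβ1 N n).trans
      (mul_le_mul_of_nonneg_right ih (by positivity))

lemma summable_majorant (β : ℝ) (hβ0 : 0 < β) (R : ℝ) (hR : 0 < R) :
    Summable (fun n => majorant β n * R ^ n) := by
  have hpos : ∀ n, 0 < majorant β n * R ^ n := fun n =>
    mul_pos (Finset.prod_pos fun l _ => by positivity) (by positivity)
  refine summable_of_ratio_test_tendsto_lt_one zero_lt_one
    (.of_forall fun n => (hpos n).ne') ?_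
  have hE : ∀ n, ‖majorant β (n + 1) * R ^ (n + 1)‖ / ‖majorant β n * R ^ n‖ =
      2 * R / (β * n + 1) ^ β := fun n => by
    rw [Real.norm_of_nonneg (hpos _).le, Real.norm_of_nonneg (hpos _).le,
      div_eq_iff (hpos n).ne', majorant, Finset.prod_range_succ, ← majorant]
    ring
  simp only [hE]
  refine Tendsto.div_atTop tendsto_const_nhds ((tendsto_rpow_atTop hβ0).comp ?_)
  exact tendsto_atTop_add_const_right _ _
    (tendsto_natCast_atTop_atTop.const_mul_atTop hβ0)

lemma tendsto_approxCoeff (β : ℝ) (hβ0 : 0 < β) (n : ℕ) :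
    Tendsto (fun N => approxCoeff β N n) atTop (𝓝 (1 / Real.Gamma (β * n + 1))) := by
  have hG : Real.Gamma (β * n + 1) ≠ 0 := (Real.Gamma_pos_of_pos (by positivity)).ne'
  have h := ((Real.GammaSeq_tendsto_Gamma (n + 1)).div
    (Real.GammaSeq_tendsto_Gamma (β * n + 1)) hG).div_const (n.factorial : ℝ)
  rw [Real.Gamma_nat_eq_factorial, div_right_comm, div_self (by positivity)] at h
  refine h.congr' ?_
  filter_upwards [eventually_gt_atTop 0] with N hN
  have hN' : (0 : ℝ) < N := by exact_mod_cast hN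
  have e : (N : ℝ) ^ ((n : ℝ) + 1) = ((N : ℝ) ^ (1 - β)) ^ n * (N : ℝ) ^ (β * n + 1) := by
    rw [← Real.rpow_natCast ((N : ℝ) ^ (1 - β)), ← Real.rpow_mul hN'.le, ← Real.rpow_add hN']
    ring_nf
  simp only [Pi.div_apply, Real.GammaSeq, approxCoeff, e, Finset.prod_div_distrib]
  have p1 : (∏ j ∈ Finset.range (N + 1), (β * n + 1 + j)) ≠ 0 :=
    Finset.prod_ne_zero_iff.2 fun j _ => by positivity
  have p2 : (∏ j ∈ Finset.range (N + 1), ((n : ℝ) + 1 + j)) ≠ 0 :=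
    Finset.prod_ne_zero_iff.2 fun j _ => by positivity
  have p3 : (N : ℝ) ^ (β * n + 1) ≠ 0 := by positivity
  field_simp

/-! ### Positivity of the derivatives of the Mittag-Leffler function -/

lemma coeff_le_majorant (β : ℝ) (hβ0 : 0 < β) (hβ1 : β ≤ 1) (n : ℕ) :
    1 / Real.Gamma (β * n + 1) ≤ majorant β n :=
  le_of_tendsto' (tendsto_approxCoeff β hβ0 n) fun N => approxCoeff_le β hβ0 hβ1 N n

lemma coeff_nonneg (β : ℝ) (hβ0 : 0 < β) (n : ℕ) : 0 ≤ 1 / Real.Gamma (β * n + 1) :=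
  ge_of_tendsto' (tendsto_approxCoeff β hβ0 n) fun N => approxCoeff_nonneg β hβ0 N n

lemma mittagLeffler_eq (β : ℝ) (z : ℂ) :
    mittagLeffler β z = ∑' n : ℕ, ((1 / Real.Gamma (β * n + 1) : ℝ) : ℂ) * z ^ n := by
  unfold mittagLeffler
  congr 1
  funext n
  rw [Complex.Gamma_ofReal]
  push_cast
  ring

lemma norm_term_le (β : ℝ) (hβ0 : 0 < β) (hβ1 : β ≤ 1) (R : ℝ) (n : ℕ) (z : ℂ)
    (hz : ‖z‖ ≤ R) :
    ‖((1 / Real.Gamma (β * n + 1) : ℝ) : ℂ) * z ^ n‖ ≤ majorant β n * R ^ n := by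
  have h := coeff_nonneg β hβ0 n
  rw [norm_mul, norm_pow, Complex.norm_real, Real.norm_of_nonneg h]
  exact mul_le_mul (coeff_le_majorant β hβ0 hβ1 n) (by gcongr) (by positivity)
    (h.trans (coeff_le_majorant β hβ0 hβ1 n))

lemma summable_term (β : ℝ) (hβ0 : 0 < β) (hβ1 : β ≤ 1) (z : ℂ) :
    Summable fun n : ℕ => ((1 / Real.Gamma (β * n + 1) : ℝ) : ℂ) * z ^ n :=
  .of_norm_bounded (summable_majorant β hβ0 (‖z‖ + 1) (by positivity)) fun n =>
    norm_term_le β hβ0 hβ1 _ n z (by linarith)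

lemma differentiable_mittagLeffler (β : ℝ) (hβ0 : 0 < β) (hβ1 : β ≤ 1) :
    Differentiable ℂ (mittagLeffler β) := by
  intro z
  have h := Complex.differentiableOn_tsum_of_summable_norm (U := Metric.ball 0 (‖z‖ + 1))
    (F := fun (n : ℕ) (w : ℂ) => ((1 / Real.Gamma (β * n + 1) : ℝ) : ℂ) * w ^ n)
    (summable_majorant β hβ0 (‖z‖ + 1) (by positivity))
    (fun n => by fun_prop) Metric.isOpen_ball
    (fun n w hw => norm_term_le β hβ0 hβ1 _ n w (mem_ball_zero_iff.1 hw).le)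
  rw [funext (mittagLeffler_eq β)]
  exact h.differentiableAt (Metric.isOpen_ball.mem_nhds (by simp))

lemma tendstoLocallyUniformly_approx (β : ℝ) (hβ0 : 0 < β) (hβ1 : β ≤ 1) (f : ℕ → ℂ → ℂ)
    (hf : ∀ N z, HasSum (fun n : ℕ => (approxCoeff β N n : ℂ) * z ^ n) (f N z)) :
    TendstoLocallyUniformlyOn f (mittagLeffler β) atTop Set.univ := by
  have hdom : ∀ R : ℝ, 0 < R → Tendsto (fun N => ∑' n : ℕ,
      |1 / Real.Gamma (β * n + 1) - approxCoeff β N n| * R ^ n) atTop (𝓝 0) := by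
    intro R hR
    have := tendsto_tsum_of_dominated_convergence (𝓕 := atTop)
      (f := fun (N n : ℕ) => |1 / Real.Gamma (β * n + 1) - approxCoeff β N n| * R ^ n)
      (g := fun _ => (0 : ℝ)) (summable_majorant β hβ0 R hR) ?_ ?_
    · simpa using this
    · intro n
      have := (((tendsto_approxCoeff β hβ0 n).const_sub
        (1 / Real.Gamma (β * n + 1))).abs).mul_const (R ^ n)
      simpa using this
    · refine .of_forall fun N n => ?_
      rw [Real.norm_of_nonneg (by positivity)]
      gcongr
      have h1 := coeff_nonneg β hβ0 n
      have h2 := coeff_le_majorant β hβ0 hβ1 n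
      have h3 := approxCoeff_nonneg β hβ0 N n
      have h4 := approxCoeff_le β hβ0 hβ1 N n
      rw [abs_le]
      constructor <;> linarith
  rw [Metric.tendstoLocallyUniformlyOn_iff]
  intro ε hε z _
  refine ⟨Metric.ball 0 (‖z‖ + 1), mem_nhdsWithin_of_mem_nhds
    (Metric.isOpen_ball.mem_nhds (by simp)), ?_⟩
  filter_upwards [(hdom (‖z‖ + 1) (by positivity)).eventually (gt_mem_nhds hε)] with N hN w hw
  have hw' : ‖w‖ ≤ ‖z‖ + 1 := (mem_ball_zero_iff.1 hw).le
  have hsum : Summable fun n : ℕ =>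
      |1 / Real.Gamma (β * n + 1) - approxCoeff β N n| * (‖z‖ + 1) ^ n := by
    refine .of_nonneg_of_le (fun n => by positivity) (fun n => ?_)
      (summable_majorant β hβ0 (‖z‖ + 1) (by positivity))
    gcongr
    have h1 := coeff_nonneg β hβ0 n
    have h2 := coeff_le_majorant β hβ0 hβ1 n
    have h3 := approxCoeff_nonneg β hβ0 N n
    have h4 := approxCoeff_le β hβ0 hβ1 N n
    rw [abs_le]
    constructor <;> linarith
  have hE : HasSum (fun n : ℕ => ((1 / Real.Gamma (β * n + 1) : ℝ) : ℂ) * w ^ n)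
      (mittagLeffler β w) := by
    rw [mittagLeffler_eq]
    exact (summable_term β hβ0 hβ1 w).hasSum
  have hsub := hE.sub (hf N w)
  rw [dist_eq_norm, ← hsub.tsum_eq]
  refine (tsum_of_norm_bounded hsum.hasSum fun n => ?_).trans_lt hN
  rw [← sub_mul, ← Complex.ofReal_sub, norm_mul, norm_pow, Complex.norm_real, Real.norm_eq_abs]
  gcongr

lemma tendstoLocallyUniformlyOn_iteratedDeriv (f : ℕ → ℂ → ℂ) (g : ℂ → ℂ)
    (hf : ∀ N, Differentiable ℂ (f N)) (h : TendstoLocallyUniformlyOn f g atTop Set.univ) (k : ℕ) :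
    TendstoLocallyUniformlyOn (fun N => iteratedDeriv k (f N)) (iteratedDeriv k g) atTop
      Set.univ := by
  induction k with
  | zero => simpa using h
  | succ k ih =>
    simp only [iteratedDeriv_succ]
    refine ih.deriv (.of_forall fun N => ?_) isOpen_univ
    exact ((hf N).contDiff.differentiable_iteratedDeriv' k).differentiableOn

/-- Every derivative of `E_β` is nonnegative on the real line; on the negative half-line this is the
complete monotonicity of `x ↦ E_β(-x)`. -/
lemma mittagLeffler_iteratedDeriv_nonneg (β : ℝ) (hβ0 : 0 < β) (hβ1 : β ≤ 1) (k : ℕ) (x : ℝ) :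
    0 ≤ (iteratedDeriv k (mittagLeffler β) x).re := by
  choose f hfd hfs hfp using exists_approx β hβ0 hβ1
  have h := (tendstoLocallyUniformlyOn_iteratedDeriv f _ hfd
    (tendstoLocallyUniformly_approx β hβ0 hβ1 f hfs) k).tendsto_at (Set.mem_univ (x : ℂ))
  exact ge_of_tendsto' ((Complex.continuous_re.tendsto _).comp h) fun N => hfp N k x

/-- Real and complex iterated derivatives agree on `ℝ` for an entire function that is real there. -/
lemma iteratedDeriv_ofReal (f : ℂ → ℂ) (g : ℝ → ℝ) (hf : Differentiable ℂ f)
    (hfg : ∀ x : ℝ, f x = g x) (k : ℕ) (x : ℝ) :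
    iteratedDeriv k f x = ((iteratedDeriv k g x : ℝ) : ℂ) := by
  induction k generalizing x with
  | zero => simpa using hfg x
  | succ k ih =>
    rw [iteratedDeriv_succ, iteratedDeriv_succ]
    have h1 : HasDerivAt (iteratedDeriv k f) (deriv (iteratedDeriv k f) x) (x : ℂ) :=
      (hf.contDiff.differentiable_iteratedDeriv' k _).hasDerivAt
    have h2 : HasDerivAt (iteratedDeriv k g) (deriv (iteratedDeriv k f) x).re x := by
      have := h1.real_of_complex
      simpa only [ih, Complex.ofReal_re] using this
    have h3 := h2.ofReal_comp
    have h4 := h1.comp_ofReal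
    simp only [ih] at h4
    rw [h2.deriv]
    exact h4.unique h3

lemma mittagLeffler_ofReal (β x : ℝ) : mittagLeffler β x = (mittagLefflerR β x : ℂ) := by
  rw [mittagLeffler, mittagLefflerR, Complex.ofReal_tsum]
  congr 1
  funext n
  rw [Complex.Gamma_ofReal]
  push_cast
  rfl

/-! ### Moments of the fractional Poisson measure -/

/-- The mass that the fractional Poisson measure gives to `k`, before truncation by
`ENNReal.ofReal`. -/
def fpWeight (lam β : ℝ) (k : ℕ) : ℝ :=
  lam ^ k / k.factorial * iteratedDeriv k (mittagLefflerR β) (-lam)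

lemma iteratedDeriv_mittagLeffler_ofReal (β : ℝ) (hβ0 : 0 < β) (hβ1 : β ≤ 1) (k : ℕ) (x : ℝ) :
    iteratedDeriv k (mittagLeffler β) x = ((iteratedDeriv k (mittagLefflerR β) x : ℝ) : ℂ) :=
  iteratedDeriv_ofReal _ _ (differentiable_mittagLeffler β hβ0 hβ1) (mittagLeffler_ofReal β) k x

/-- The Taylor expansion of `E_β` around `-λ`, evaluated at `λ(w - 1)`: the probability generating
function of the weights. -/
lemma hasSum_fpWeight (lam β : ℝ) (hβ0 : 0 < β) (hβ1 : β ≤ 1) (w : ℂ) :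
    HasSum (fun k : ℕ => (fpWeight lam β k : ℂ) * w ^ k) (mittagLeffler β (lam * (w - 1))) := by
  have h := Complex.hasSum_taylorSeries_of_entire (differentiable_mittagLeffler β hβ0 hβ1)
    ((-lam : ℝ) : ℂ) (lam * (w - 1))
  suffices H : ∀ k : ℕ, (k.factorial : ℂ)⁻¹ • ((lam : ℂ) * (w - 1) - ((-lam : ℝ) : ℂ)) ^ k •
      iteratedDeriv k (mittagLeffler β) ((-lam : ℝ) : ℂ) = (fpWeight lam β k : ℂ) * w ^ k by
    simpa only [H] using h
  intro k
  rw [iteratedDeriv_mittagLeffler_ofReal β hβ0 hβ1, fpWeight]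
  have : (lam : ℂ) * (w - 1) - ((-lam : ℝ) : ℂ) = lam * w := by push_cast; ring
  rw [this, mul_pow]
  simp only [smul_eq_mul]
  push_cast
  ring

lemma fpWeight_nonneg (lam β : ℝ) (hlam : 0 < lam) (hβ0 : 0 < β) (hβ1 : β ≤ 1)
    (k : ℕ) : 0 ≤ fpWeight lam β k := by
  have := mittagLeffler_iteratedDeriv_nonneg β hβ0 hβ1 k (-lam)
  rw [iteratedDeriv_mittagLeffler_ofReal β hβ0 hβ1, Complex.ofReal_re] at this
  unfold fpWeight
  positivity

lemma summable_fpWeight_exp (lam β : ℝ) (hlam : 0 < lam) (hβ0 : 0 < β) (hβ1 : β ≤ 1)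
    (t : ℝ) :
    Summable fun k : ℕ => (ENNReal.ofReal (fpWeight lam β k)).toReal * Real.exp (t * k) := by
  have h := (hasSum_fpWeight lam β hβ0 hβ1 (Complex.exp t)).summable.norm
  refine h.congr fun k => ?_
  rw [ENNReal.toReal_ofReal (fpWeight_nonneg lam β hlam hβ0 hβ1 k), norm_mul, norm_pow,
    Complex.norm_real, Real.norm_of_nonneg (fpWeight_nonneg lam β hlam hβ0 hβ1 k),
    Complex.norm_exp, Complex.ofReal_re, ← Real.exp_nat_mul, mul_comm t]

lemma integrableExpSet_fracPoisson (lam β : ℝ) (hlam : 0 < lam) (hβ0 : 0 < β) (hβ1 : β ≤ 1) :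
    integrableExpSet id (fracPoisson lam β) = Set.univ := by
  refine Set.eq_univ_of_forall fun t => ?_
  refine integrable_sum_dirac (fun k => ENNReal.ofReal_ne_top) ?_
  have h := summable_fpWeight_exp lam β hlam hβ0 hβ1 t
  simpa [fpWeight] using h

lemma complexMGF_fracPoisson (lam β : ℝ) (hlam : 0 < lam) (hβ0 : 0 < β) (hβ1 : β ≤ 1)
    (z : ℂ) :
    complexMGF id (fracPoisson lam β) z = mittagLeffler β (lam * (Complex.exp z - 1)) := by
  rw [complexMGF, fracPoisson, integral_sum_dirac (fun k => ENNReal.ofReal_ne_top),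
    ← (hasSum_fpWeight lam β hβ0 hβ1 (Complex.exp z)).tsum_eq]
  congr 1
  funext k
  rw [← fpWeight, ENNReal.toReal_ofReal (fpWeight_nonneg lam β hlam hβ0 hβ1 k),
    ← Complex.exp_nat_mul, Complex.real_smul, mul_comm (k : ℂ)]
  simp

lemma fpMoment_eq (lam β : ℝ) (hlam : 0 < lam) (hβ0 : 0 < β) (hβ1 : β ≤ 1)
    (n : ℕ) :
    iteratedDeriv n (fun z => mittagLeffler β (lam * (Complex.exp z - 1))) 0 =
      (fpMoment lam β n : ℂ) := by
  rw [← funext (complexMGF_fracPoisson lam β hlam hβ0 hβ1), iteratedDeriv_complexMGF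
    (by simp [integrableExpSet_fracPoisson lam β hlam hβ0 hβ1]), fpMoment,
    ← integral_complex_ofReal]
  simp

/-! ### Stirling numbers and composition with `eᶻ - 1` -/

lemma stirlingSnd_eq (n k : ℕ) :
    iteratedDeriv n (fun z : ℂ => (Complex.exp z - 1) ^ k) 0 / k.factorial =
      (stirlingSnd n k : ℂ) := by
  have := iteratedDeriv_ofReal (fun z : ℂ => (Complex.exp z - 1) ^ k)
    (fun x : ℝ => (Real.exp x - 1) ^ k) (by fun_prop) (by simp) n 0
  rw [Complex.ofReal_zero] at this
  rw [this, stirlingSnd]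
  push_cast
  rfl

/-- Faà di Bruno's formula for the inner function `eᶻ - 1`: in Taylor's formula for `F` to order `k`
the remainder becomes a multiple of `(eᶻ - 1) ^ (k + 1)`, whose `k`-th derivative vanishes at `0`. -/
lemma iteratedDeriv_comp_exp_sub_one (F : ℂ → ℂ) (hF : AnalyticAt ℂ F 0) (k : ℕ) :
    iteratedDeriv k (fun z => F (Complex.exp z - 1)) 0 =
      ∑ m ∈ Finset.range (k + 1), iteratedDeriv m F 0 * (stirlingSnd k m : ℂ) := by
  obtain ⟨G, hG, hFG⟩ := hF.exists_eventuallyEq_sum_add_pow_mul (k + 1)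
  have hu : AnalyticAt ℂ (fun z : ℂ => Complex.exp z - 1) 0 := by fun_prop
  have hu0 : (fun z : ℂ => Complex.exp z - 1) 0 = 0 := by simp
  have hGu : AnalyticAt ℂ (fun z => G (Complex.exp z - 1)) 0 :=
    AnalyticAt.fun_comp (by simpa using hG) hu
  have htend : Tendsto (fun z : ℂ => Complex.exp z - 1) (𝓝 0) (𝓝 0) := by
    simpa using hu.continuousAt.tendsto
  have hrem : AnalyticAt ℂ
      (fun z : ℂ => (Complex.exp z - 1) ^ (k + 1) * G (Complex.exp z - 1)) 0 :=
    (hu.pow _).mul hGu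
  have hzero : iteratedDeriv k
      (fun z : ℂ => (Complex.exp z - 1) ^ (k + 1) * G (Complex.exp z - 1)) 0 = 0 := by
    refine (natCast_le_analyticOrderAt_iff_iteratedDeriv_eq_zero hrem (n := k + 1)).1 ?_ k
      k.lt_succ_self
    have h1 : 1 ≤ analyticOrderAt (fun z : ℂ => Complex.exp z - 1) 0 := by
      rw [Order.one_le_iff_ne_zero, hu.analyticOrderAt_ne_zero]
      exact hu0
    have h2 := analyticOrderAt_mul (hu.pow (k + 1)) hGu
    rw [analyticOrderAt_pow hu] at h2
    refine le_trans ?_ (h2.ge)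
    refine le_trans ?_ (le_self_add)
    rw [nsmul_eq_mul]
    exact le_mul_of_one_le_right' h1
  have hev : (fun z => F (Complex.exp z - 1)) =ᶠ[𝓝 0] fun z =>
      (∑ i ∈ Finset.range (k + 1),
        (iteratedDeriv i F 0 / i.factorial) * (Complex.exp z - 1) ^ i) +
      (Complex.exp z - 1) ^ (k + 1) * G (Complex.exp z - 1) := by
    filter_upwards [htend.eventually hFG] with z hz
    rw [hz]
    simp only [smul_eq_mul]
    congr 1
    exact Finset.sum_congr rfl fun i _ => by ring
  rw [hev.iteratedDeriv_eq, iteratedDeriv_fun_add (ContDiff.contDiffAt (by fun_prop))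
    hrem.contDiffAt, hzero, add_zero,
    iteratedDeriv_fun_sum (fun i _ => ContDiff.contDiffAt (by fun_prop))]
  refine Finset.sum_congr rfl fun i _ => ?_
  rw [iteratedDeriv_const_mul_field, ← stirlingSnd_eq]
  ring

theorem stmt5 (lam β : ℝ) (hlam : 0 < lam) (hβ0 : 0 < β) (hβ1 : β ≤ 1) (n : ℕ) (x : ℝ) :
    ((x : ℂ)) ^ n =
      ∑ k ∈ Finset.range (n + 1), ∑ m ∈ Finset.range (k + 1),
        (n.choose k : ℂ) * genAppell lam β m x * (stirlingSnd k m : ℂ) *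
          ((fpMoment lam β (n - k) : ℝ) : ℂ) := by
  have hE := differentiable_mittagLeffler β hβ0 hβ1
  have hE0 : mittagLeffler β 0 = 1 := by
    rw [mittagLeffler, tsum_eq_single 0 (fun n hn => by simp [hn])]
    simp
  set F : ℂ → ℂ := fun z => Complex.exp (x * Complex.log (1 + z)) / mittagLeffler β (lam * z)
    with hF
  set H : ℂ → ℂ := fun z => mittagLeffler β (lam * (Complex.exp z - 1)) with hH
  have hHd : Differentiable ℂ H := hE.comp (by fun_prop)
  have hFa : AnalyticAt ℂ F 0 := by
    have h1 : AnalyticAt ℂ (fun z : ℂ => Complex.log (1 + z)) 0 :=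
      AnalyticAt.clog (by fun_prop) (by simp)
    have h2 : AnalyticAt ℂ (fun z : ℂ => mittagLeffler β (lam * z)) 0 :=
      (hE.comp (by fun_prop : Differentiable ℂ fun z : ℂ => (lam : ℂ) * z)).analyticAt 0
    exact (analyticAt_const.mul h1).cexp.div h2 (by simp [hE0])
  have hFe : AnalyticAt ℂ (fun z => F (Complex.exp z - 1)) 0 :=
    AnalyticAt.fun_comp (by simpa using hFa) (by fun_prop)
  -- `log (1 + (eᶻ - 1)) = z` holds near `0`, and there the denominator does not vanish.
  have hprod : (fun z : ℂ => Complex.exp (x * z)) =ᶠ[𝓝 0]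
      fun z => F (Complex.exp z - 1) * H z := by
    have hne : ∀ᶠ z in 𝓝 (0 : ℂ), H z ≠ 0 :=
      hHd.continuous.continuousAt.eventually_ne (by simp [hH, hE0])
    have him : ∀ᶠ z in 𝓝 (0 : ℂ), |z.im| < Real.pi :=
      (Complex.continuous_im.abs.tendsto' 0 0 (by simp)).eventually (gt_mem_nhds Real.pi_pos)
    filter_upwards [hne, him] with z hz hzi
    rw [abs_lt] at hzi
    simp only [hF]
    rw [add_sub_cancel, Complex.log_exp hzi.1 hzi.2.le]
    exact (div_mul_cancel₀ _ hz).symm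
  have hexp : iteratedDeriv n (fun z : ℂ => Complex.exp (x * z)) 0 = (x : ℂ) ^ n := by
    simp [iteratedDeriv_cexp_const_mul]
  rw [← hexp, hprod.iteratedDeriv_eq, iteratedDeriv_fun_mul hFe.contDiffAt
    (hHd.analyticAt 0).contDiffAt]
  refine Finset.sum_congr rfl fun k _ => ?_
  rw [iteratedDeriv_comp_exp_sub_one F hFa, hH, fpMoment_eq lam β hlam hβ0 hβ1,
    Finset.mul_sum, Finset.sum_mul]
  refine Finset.sum_congr rfl fun m _ => ?_
  rw [genAppell]
  ring
end
end
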